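/- arXiv:2602.13822 — 5 statements merged into one kernel-verified Lean document; each statement's English description precedes it below -/
import Mathlib

section
/- Let n ≥ 1, s ∈ (0,1), and let K be an admissible kernel. Assume 1 < q ≤ n/(n−2s) if n > 2s, and 1 < q < ∞ if n ≤ 2s. Then every nonnegative weak supersolution u of L_K u = u^q in ℝⁿ satisfies u = 0 almost everywhere in ℝⁿ. -/
open MeasureTheory Metric

noncomputable section

abbrev Euc (n : ℕ) := EuclideanSpace ℝ (Fin n)

def IsAdmissibleKernel (n : ℕ) (s lam Lam : ℝ) (K : Euc n → ℝ) : Prop :=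
  0 < lam ∧ lam ≤ Lam ∧ Measurable K ∧
  (∀ z : Euc n, z ≠ 0 → K z = K (-z)) ∧
  (∀ z : Euc n, z ≠ 0 →
    lam * ‖z‖ ^ (-(n : ℝ) - 2 * s) ≤ K z ∧ K z ≤ Lam * ‖z‖ ^ (-(n : ℝ) - 2 * s))

def LK (n : ℕ) (K φ : Euc n → ℝ) (x : Euc n) : ℝ :=
  (1 / 2) * ∫ z : Euc n, (2 * φ x - φ (x + z) - φ (x - z)) * K z

def IsTestFun (n : ℕ) (φ : Euc n → ℝ) : Prop :=
  ContDiff ℝ (⊤ : ℕ∞) φ ∧ HasCompactSupport φ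

def MemL1Tail (n : ℕ) (s : ℝ) (u : Euc n → ℝ) : Prop :=
  LocallyIntegrable u volume ∧
  Integrable (fun x : Euc n => |u x| * (1 + ‖x‖) ^ (-(n : ℝ) - 2 * s)) volume

def MemLqLoc (n : ℕ) (q : ℝ) (u : Euc n → ℝ) : Prop :=
  ∀ R : ℝ, 0 < R → IntegrableOn (fun x : Euc n => u x ^ q) (ball (0 : Euc n) R) volume

def IsWeakSupersol (n : ℕ) (s q : ℝ) (K u : Euc n → ℝ) : Prop :=
  Measurable u ∧ (∀ x, 0 ≤ u x) ∧ MemLqLoc n q u ∧ MemL1Tail n s u ∧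
  ∀ φ : Euc n → ℝ, IsTestFun n φ → (∀ x, 0 ≤ φ x) →
    (∫ x : Euc n, u x ^ q * φ x) ≤ ∫ x : Euc n, u x * LK n K φ x

def IsCutoff (n : ℕ) (η : Euc n → ℝ) : Prop :=
  ContDiff ℝ (⊤ : ℕ∞) η ∧ (∀ x, 0 ≤ η x ∧ η x ≤ 1) ∧
  (∀ x : Euc n, ‖x‖ ≤ 1 → η x = 1) ∧ (∀ x : Euc n, 2 ≤ ‖x‖ → η x = 0)

def cutoffSq (n : ℕ) (η : Euc n → ℝ) (R : ℝ) : Euc n → ℝ :=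
  fun x => (η (R⁻¹ • x)) ^ 2


theorem aux_pow (a b : ℝ) (ha : 0 ≤ a) (hb : 0 ≤ b) (k : ℕ) :
    a ^ (k+1) - b ^ (k+1) ≤ (k+1) * a ^ k * (a - b) := by
  induction k with
  | zero => simp
  | succ k ih =>
    have h1 := mul_le_mul_of_nonneg_left ih hb
    have h2 : 0 ≤ (k+1 : ℝ) * a ^ k * (a - b) ^ 2 := by positivity
    push_cast
    have e1 : a ^ (k+1) = a ^ k * a := pow_succ _ _
    have e2 : a ^ (k+1+1) = a ^ k * a * a := by rw [pow_succ, pow_succ]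
    have e3 : b ^ (k+1+1) = b ^ (k+1) * b := pow_succ _ _
    rw [e2, e3, e1]
    rw [e1] at h1
    nlinarith

theorem aux_second {n : ℕ} (η : Euc n → ℝ) (h1 : ContDiff ℝ (⊤ : ℕ∞) η)
    (h2 : HasCompactSupport η) :
    ∃ C : ℝ, 0 ≤ C ∧ ∀ x z, |2 * η x - η (x + z) - η (x - z)| ≤ C * ‖z‖ ^ 2 := by
  obtain ⟨C, hC⟩ := ContDiff.lipschitzWith_of_hasCompactSupport (𝕂 := ℝ) (n := 1) (h2.fderiv (𝕜 := ℝ))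
    (h1.fderiv_right (m := 1) (by rw [one_add_one_eq_two]; exact WithTop.coe_le_coe.2 le_top)) one_ne_zero
  have key : ∀ x z, |η (x + z) - η x - fderiv ℝ η x z| ≤ C * ‖z‖ ^ 2 := by
    intro x z
    have := (convex_closedBall x ‖z‖).norm_image_sub_le_of_norm_hasFDerivWithin_le'
      (f := η) (f' := fderiv ℝ η) (φ := fderiv ℝ η x) (C := C * ‖z‖) (x := x) (y := x + z)
      (fun y _ => ((h1.differentiable (by simp)) y).hasFDerivAt.hasFDerivWithinAt)
      (fun y hy => by
        have := hC.norm_sub_le y x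
        refine this.trans ?_
        have hy' : ‖y - x‖ ≤ ‖z‖ := by simpa [dist_eq_norm] using hy
        gcongr) (by simp) (by simp)
    rw [Real.norm_eq_abs] at this
    simp only [add_sub_cancel_left] at this
    refine this.trans (le_of_eq (by ring))
  refine ⟨2 * C, by positivity, fun x z => ?_⟩
  have a := key x z
  have b := key x (-z)
  rw [norm_neg, map_neg, ← sub_eq_add_neg] at b
  rw [abs_le] at *
  constructor <;> linarith [a.1, a.2, b.1, b.2]

theorem aux_int {n : ℕ} (hn : 1 ≤ n) (s : ℝ) (hs : s ∈ Set.Ioo (0 : ℝ) 1) :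
    Integrable (fun w : Euc n => min 1 (‖w‖ ^ 2) * ‖w‖ ^ (-(n : ℝ) - 2 * s)) volume := by
  obtain ⟨hs0, hs1⟩ := hs
  have : Nontrivial (Euc n) := by
    apply Module.nontrivial_of_finrank_pos (R := ℝ)
    simp; omega
  rw [integrable_fun_norm_addHaar (μ := (volume : Measure (Euc n)))
    (f := fun y : ℝ => min 1 (y ^ 2) * y ^ (-(n : ℝ) - 2 * s))]
  have hd : Module.finrank ℝ (Euc n) = n := by simp
  rw [hd]
  rw [← Set.Ioc_union_Ioi_eq_Ioi (zero_le_one' ℝ)]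
  have ev : ∀ y : ℝ, 0 < y → y ^ (n-1) * y ^ (-(n : ℝ) - 2 * s) = y ^ (-1 - 2 * s) := by
    intro y hy
    rw [← Real.rpow_natCast, ← Real.rpow_add hy, Nat.cast_sub hn]
    congr 1; push_cast; ring
  apply IntegrableOn.union
  · have h : IntegrableOn (fun y : ℝ => y ^ (1 - 2 * s)) (Set.Ioc 0 1) := by
      have := intervalIntegral.intervalIntegrable_rpow' (a := 0) (b := 1) (r := 1 - 2 * s) (by linarith)
      rwa [intervalIntegrable_iff_integrableOn_Ioc_of_le zero_le_one] at this
    refine h.congr_fun (fun y hy => ?_) measurableSet_Ioc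
    have h0 := hy.1
    have h1 := hy.2
    simp only [smul_eq_mul]
    rw [min_eq_right (by nlinarith), mul_left_comm, ev y h0, ← Real.rpow_natCast, ← Real.rpow_add h0]
    congr 1; push_cast; ring
  · have h : IntegrableOn (fun y : ℝ => y ^ (-1 - 2 * s)) (Set.Ioi 1) :=
      integrableOn_Ioi_rpow_of_lt (by linarith) one_pos
    refine h.congr_fun (fun y hy => ?_) measurableSet_Ioi
    have h1 : 1 < y := hy
    simp only [smul_eq_mul]
    rw [min_eq_left (by nlinarith), one_mul, ev y (by linarith)]

theorem aux_mono {α : Type*} [MeasurableSpace α] {μ : Measure α} {f g : α → ℝ} (hg : Integrable g μ)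
    (h0 : ∀ x, 0 ≤ g x) (h : ∀ x, f x ≤ g x) : ∫ x, f x ∂μ ≤ ∫ x, g x ∂μ := by
  by_cases hf : Integrable f μ
  · exact integral_mono hf hg h
  · rw [integral_undef hf]; exact integral_nonneg h0

theorem aux_LK {n : ℕ} (hn : 1 ≤ n) (s : ℝ) (hs : s ∈ Set.Ioo (0 : ℝ) 1)
    (lam Lam : ℝ) (K : Euc n → ℝ) (hK : IsAdmissibleKernel n s lam Lam K)
    (η : Euc n → ℝ) (h1 : ContDiff ℝ (⊤ : ℕ∞) η)
    (h2 : HasCompactSupport η) (h3 : ∀ x, 0 ≤ η x) (h4 : ∀ x, η x ≤ 1) (k : ℕ) :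
    ∃ A : ℝ, 0 ≤ A ∧ ∀ R : ℝ, 0 < R → ∀ x,
      LK n K (fun x => η (R⁻¹ • x) ^ (k+1)) x ≤ A * R ^ (-(2 * s)) * η (R⁻¹ • x) ^ k := by
  obtain ⟨C, hC0, hC⟩ := aux_second η h1 h2
  obtain ⟨hl, hlL, -, -, hKb⟩ := hK
  set f : Euc n → ℝ := fun w => min 1 (‖w‖ ^ 2) * ‖w‖ ^ (-(n : ℝ) - 2 * s) with hf
  have hfi : Integrable f := aux_int hn s hs
  have hf0 : ∀ w, 0 ≤ f w := fun w => by positivity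
  have hb : ∀ x z, 2 * η x - η (x + z) - η (x - z) ≤ (C + 4) * min 1 (‖z‖ ^ 2) := by
    intro x z
    rcases le_total 1 (‖z‖ ^ 2) with h | h
    · rw [min_eq_left h]; linarith [h4 x, h3 (x+z), h3 (x-z)]
    · rw [min_eq_right h]
      have := (le_abs_self _).trans (hC x z)
      nlinarith [sq_nonneg ‖z‖]
  have hL : 0 < Lam := hl.trans_le hlL
  refine ⟨(k+1) * (C + 4) * Lam * ∫ w, f w, ?_, ?_⟩
  · have : 0 ≤ ∫ w, f w := integral_nonneg (fun w => hf0 w)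
    positivity
  intro R hR x
  have hscale : ∀ z : Euc n, min 1 (‖R⁻¹ • z‖ ^ 2) * ‖z‖ ^ (-(n : ℝ) - 2 * s)
      = R ^ (-(n : ℝ) - 2 * s) * f (R⁻¹ • z) := by
    intro z
    simp only [hf]
    have : ‖z‖ = R * ‖R⁻¹ • z‖ := by
      rw [norm_smul, norm_inv, Real.norm_of_nonneg hR.le]; field_simp
    conv_lhs => rw [this, Real.mul_rpow hR.le (norm_nonneg _)]
    ring
  have hfR : Integrable (fun z => f (R⁻¹ • z)) := hfi.comp_smul (inv_ne_zero hR.ne')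
  have hint : ∫ z, f (R⁻¹ • z) = R ^ n * ∫ z, f z := by
    rw [Measure.integral_comp_inv_smul_of_nonneg _ _ hR.le]
    simp
  set D : ℝ := (k+1) * η (R⁻¹ • x) ^ k * (C + 4) * Lam * R ^ (-(n : ℝ) - 2 * s) with hD
  have hD0 : 0 ≤ D := by have := h3 (R⁻¹ • x); positivity
  have main : ∫ z : Euc n, (2 * η (R⁻¹ • x) ^ (k+1) - η (R⁻¹ • (x + z)) ^ (k+1) - η (R⁻¹ • (x - z)) ^ (k+1)) * K z
      ≤ ∫ z, D * f (R⁻¹ • z) := by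
    apply aux_mono (hfR.const_mul D)
    · intro z; exact mul_nonneg hD0 (hf0 _)
    intro z
    by_cases hz : z = 0
    · subst hz
      have e : 2 * η (R⁻¹ • x) ^ (k+1) - η (R⁻¹ • (x + 0)) ^ (k+1) - η (R⁻¹ • (x - 0)) ^ (k+1) = 0 := by
        simp only [add_zero, sub_zero]; ring
      rw [e, zero_mul]
      exact mul_nonneg hD0 (hf0 _)
    have hKz := hKb z hz
    have hK0 : 0 ≤ K z := le_trans (by positivity) hKz.1
    have p1 := aux_pow _ _ (h3 (R⁻¹ • x)) (h3 (R⁻¹ • (x + z))) k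
    have p2 := aux_pow _ _ (h3 (R⁻¹ • x)) (h3 (R⁻¹ • (x - z))) k
    have p3 := hb (R⁻¹ • x) (R⁻¹ • z)
    rw [← smul_add, ← smul_sub] at p3
    have hk0 : 0 ≤ (k+1) * η (R⁻¹ • x) ^ k := by have := h3 (R⁻¹ • x); positivity
    have p4 := mul_le_mul_of_nonneg_left p3 hk0
    have p5 : 2 * η (R⁻¹ • x) ^ (k+1) - η (R⁻¹ • (x + z)) ^ (k+1) - η (R⁻¹ • (x - z)) ^ (k+1)
      ≤ (k+1) * η (R⁻¹ • x) ^ k * ((C + 4) * min 1 (‖R⁻¹ • z‖ ^ 2)) := by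
      refine le_trans ?_ p4
      linarith
    calc _ ≤ ((k+1) * η (R⁻¹ • x) ^ k * ((C + 4) * min 1 (‖R⁻¹ • z‖ ^ 2))) * K z := by gcongr
      _ ≤ ((k+1) * η (R⁻¹ • x) ^ k * ((C + 4) * min 1 (‖R⁻¹ • z‖ ^ 2))) *
            (Lam * ‖z‖ ^ (-(n : ℝ) - 2 * s)) := by
          apply mul_le_mul_of_nonneg_left hKz.2
          positivity
      _ = ((k+1) * η (R⁻¹ • x) ^ k * (C + 4) * Lam) * (min 1 (‖R⁻¹ • z‖ ^ 2) * ‖z‖ ^ (-(n : ℝ) - 2 * s)) := by ring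
      _ = _ := by rw [hscale, hD]; ring
  rw [integral_const_mul, hint] at main
  have hRR : R ^ (-(n : ℝ) - 2 * s) * R ^ n = R ^ (-(2 * s)) := by
    rw [← Real.rpow_natCast, ← Real.rpow_add hR]; congr 1; ring
  have e : D * (R ^ n * ∫ z, f z) = (k+1) * (C + 4) * Lam * (∫ w, f w) * R ^ (-(2 * s)) * η (R⁻¹ • x) ^ k := by
    rw [← hRR, hD]; ring
  rw [e] at main
  unfold LK
  have h0 : 0 ≤ (k+1) * (C + 4) * Lam * (∫ w, f w) * R ^ (-(2 * s)) * η (R⁻¹ • x) ^ k := by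
    have : 0 ≤ ∫ w, f w := integral_nonneg (fun w => hf0 w)
    have := h3 (R⁻¹ • x)
    positivity
  linarith

theorem aux_loc {n : ℕ} (f w : Euc n → ℝ) (r : ℝ) (hf : IntegrableOn f (ball 0 r) volume)
    (hw : Continuous w) (h0 : ∀ x, 0 ≤ w x) (h1 : ∀ x, w x ≤ 1) (hz : ∀ x, x ∉ ball (0 : Euc n) r → w x = 0)
    (j : ℕ) (hj : j ≠ 0) : Integrable (fun x => f x * w x ^ j) volume := by
  rw [← integrableOn_iff_integrable_of_support_subset (s := ball (0 : Euc n) r)]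
  · apply hf.mul_bdd (c := 1)
    · exact (hw.pow j).aestronglyMeasurable
    · refine Filter.Eventually.of_forall fun x => ?_
      rw [Real.norm_of_nonneg (pow_nonneg (h0 x) j)]
      exact pow_le_one₀ (h0 x) (h1 x)
  · intro x hx
    by_contra h
    apply hx
    simp [hz x h, hj]

theorem aux_final {n : ℕ} (q q' s A M : ℝ) (hs : 0 < s) (hq : 1 < q) (hq' : 0 < q') (u : Euc n → ℝ) (hu0 : ∀ x, 0 ≤ u x)
    (hi : Integrable (fun x => u x ^ q) volume)
    (h : ∀ R : ℝ, 1 ≤ R → ∀ ρ ε : ℝ, 0 < ε → ∫ x in ball (0 : Euc n) R, u x ^ q ≤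
      A * R ^ (-(2*s)) * (∫ x in ball (0 : Euc n) ρ, u x) +
        ε⁻¹ ^ q * (∫ x in (ball (0 : Euc n) ρ)ᶜ, u x ^ q) + ε ^ q' * M) :
    ∀ᵐ x : Euc n, u x = 0 := by
  have hlim : Filter.Tendsto (fun R : ℝ => ∫ x in ball (0 : Euc n) R, u x ^ q) Filter.atTop
      (nhds (∫ x, u x ^ q)) :=
    (aecover_ball Filter.tendsto_id).integral_tendsto_of_countably_generated hi
  have hR0 : Filter.Tendsto (fun R : ℝ => R ^ (-(2*s))) Filter.atTop (nhds 0) :=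
    tendsto_rpow_neg_atTop (by linarith)
  have s1 : ∀ ρ ε : ℝ, 0 < ε → ∫ x, u x ^ q ≤
      ε⁻¹ ^ q * ((∫ x, u x ^ q) - ∫ x in ball (0 : Euc n) ρ, u x ^ q) + ε ^ q' * M := by
    intro ρ ε hε
    have hr : Filter.Tendsto (fun R : ℝ => A * R ^ (-(2*s)) * (∫ x in ball (0 : Euc n) ρ, u x) +
        ε⁻¹ ^ q * (∫ x in (ball (0 : Euc n) ρ)ᶜ, u x ^ q) + ε ^ q' * M) Filter.atTop
        (nhds (A * 0 * (∫ x in ball (0 : Euc n) ρ, u x) +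
        ε⁻¹ ^ q * (∫ x in (ball (0 : Euc n) ρ)ᶜ, u x ^ q) + ε ^ q' * M)) :=
      (((hR0.const_mul A).mul_const _).add_const _).add_const _
    have := le_of_tendsto_of_tendsto hlim hr
      ((Filter.eventually_ge_atTop 1).mono fun R hR => h R hR ρ ε hε)
    have e := integral_add_compl (measurableSet_ball (x := (0 : Euc n)) (ε := ρ)) hi
    rw [← e, add_sub_cancel_left, e]
    linarith
  have s2 : ∀ ε : ℝ, 0 < ε → ∫ x, u x ^ q ≤ ε ^ q' * M := by
    intro ε hε
    have hr := ((hlim.const_sub (∫ x, u x ^ q)).const_mul (ε⁻¹ ^ q)).add_const (ε ^ q' * M)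
    have := ge_of_tendsto hr (Filter.Eventually.of_forall fun ρ => s1 ρ ε hε)
    simpa using this
  have s3 : ∫ x, u x ^ q ≤ 0 := by
    have hr : Filter.Tendsto (fun ε : ℝ => ε ^ q' * M) (nhdsWithin 0 (Set.Ioi 0)) (nhds (0 ^ q' * M)) :=
      (((Real.continuous_rpow_const hq'.le).tendsto 0).mul_const M).mono_left nhdsWithin_le_nhds
    have := ge_of_tendsto hr (Filter.eventually_of_mem self_mem_nhdsWithin fun ε hε => s2 ε hε)
    rwa [Real.zero_rpow hq'.ne', zero_mul] at this
  have hnn : ∀ x, 0 ≤ u x ^ q := fun x => Real.rpow_nonneg (hu0 x) q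
  have s4 := le_antisymm s3 (integral_nonneg hnn)
  rw [integral_eq_zero_iff_of_nonneg hnn hi] at s4
  filter_upwards [s4] with x hx
  have : u x ^ q = 0 := hx
  rw [Real.rpow_eq_zero (hu0 x) (by linarith)] at this
  exact this

/-- Liouville theorem for nonnegative weak supersolutions of
`L_K u = u^q` in the full range `1 < q ≤ n/(n-2s)` (any `q > 1` if `n ≤ 2s`). -/
theorem liouville_nonlocal_laneEmden
    (n : ℕ) (hn : 1 ≤ n) (s : ℝ) (hs : s ∈ Set.Ioo (0 : ℝ) 1)
    (lam Lam : ℝ) (K : Euc n → ℝ) (hK : IsAdmissibleKernel n s lam Lam K)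
    (q : ℝ) (hq1 : 1 < q)
    (hq2 : 2 * s < (n : ℝ) → q ≤ (n : ℝ) / ((n : ℝ) - 2 * s))
    (u : Euc n → ℝ) (hu : IsWeakSupersol n s q K u) :
    ∀ᵐ x : Euc n, u x = 0 := by
  obtain ⟨-, hu0, huq, ⟨hul, -⟩, hsup⟩ := hu
  have hs0 : 0 < s := hs.1
  have hn0 : (1:ℝ) ≤ n := by exact_mod_cast hn
  obtain ⟨k, hk⟩ := exists_nat_ge (1 / (q - 1))
  have hk1 : (k : ℝ) + 1 ≤ k * q := by
    rw [div_le_iff₀ (by linarith)] at hk; linarith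
  have hk0 : k ≠ 0 := by
    rintro rfl; norm_num at hk1
  have hpq : q.HolderConjugate q.conjExponent := Real.HolderConjugate.conjExponent hq1
  set q' := q.conjExponent with hq'
  have hq'0 : 0 < q' := hpq.symm.pos
  have hq'1 : 1 < q' := hpq.symm.lt
  have hexp : (n : ℝ) ≤ 2 * s * q' := by
    have e : q' = q / (q - 1) := rfl
    rw [e, mul_div_assoc', le_div_iff₀ (by linarith)]
    rcases lt_or_ge (2 * s) (n : ℝ) with h | h
    · have := hq2 h
      rw [le_div_iff₀ (by linarith)] at this
      linarith
    · nlinarith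
  let b : ContDiffBump (0 : Euc n) := ⟨1, 2, one_pos, one_lt_two⟩
  let η : Euc n → ℝ := b
  have hη1 : ContDiff ℝ (⊤ : ℕ∞) η := b.contDiff
  have hη2 : HasCompactSupport η := b.hasCompactSupport
  have hη3 : ∀ x, 0 ≤ η x := fun x => b.nonneg
  have hη4 : ∀ x, η x ≤ 1 := fun x => b.le_one
  obtain ⟨A, hA0, hA⟩ := aux_LK hn s hs lam Lam K hK η hη1 hη2 hη3 hη4 k
  let V : ℝ := volume.real (ball (0 : Euc n) 1)
  have hV : 0 ≤ V := measureReal_nonneg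
  let M : ℝ := A ^ q' * 2 ^ n * V
  have hbM : ∀ R : ℝ, 1 ≤ R → (A * R ^ (-(2*s))) ^ q' * volume.real (ball (0 : Euc n) (2 * R)) ≤ M := by
    intro R hR
    have hR0 : 0 < R := by linarith
    have e1 : volume.real (ball (0 : Euc n) (2 * R)) = (2 * R) ^ n * V := by
      rw [measureReal_def, Measure.addHaar_ball_of_pos _ _ (by positivity : 0 < 2 * R)]
      rw [ENNReal.toReal_mul, ENNReal.toReal_ofReal (by positivity)]
      simp [V, measureReal_def]
    have e2 : R ^ (-(2*s) * q') * R ^ n ≤ 1 := by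
      rw [← Real.rpow_natCast R n, ← Real.rpow_add hR0]
      exact Real.rpow_le_one_of_one_le_of_nonpos hR (by linarith)
    rw [e1, Real.mul_rpow hA0 (by positivity), ← Real.rpow_mul hR0.le]
    calc _ = (A ^ q' * 2 ^ n * V) * (R ^ (-(2*s) * q') * R ^ n) := by rw [mul_pow]; ring
      _ ≤ (A ^ q' * 2 ^ n * V) * 1 := by gcongr
      _ = M := by simp [M]
  have hnn : ∀ x, 0 ≤ u x ^ q := fun x => Real.rpow_nonneg (hu0 x) q
  have hub : ∀ r : ℝ, IntegrableOn u (ball (0 : Euc n) r) volume := fun r =>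
    (hul.integrableOn_isCompact (isCompact_closedBall 0 r)).mono_set ball_subset_closedBall
  -- facts on the rescaled cutoff
  have hw0 : ∀ R : ℝ, 0 < R → ∀ x, x ∉ ball (0 : Euc n) (2 * R) → η (R⁻¹ • x) = 0 := by
    intro R hR x hx
    apply b.zero_of_le_dist
    rw [mem_ball, dist_zero_right, not_lt] at hx
    rw [dist_zero_right, norm_smul, norm_inv, Real.norm_of_nonneg hR.le]
    change 2 ≤ R⁻¹ * ‖x‖
    rw [inv_mul_eq_div, le_div_iff₀ hR]; exact hx
  have hw1 : ∀ R : ℝ, 0 < R → ∀ x, x ∈ ball (0 : Euc n) R → η (R⁻¹ • x) = 1 := by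
    intro R hR x hx
    apply b.one_of_mem_closedBall
    rw [mem_ball, dist_zero_right] at hx
    rw [mem_closedBall, dist_zero_right, norm_smul, norm_inv, Real.norm_of_nonneg hR.le]
    change R⁻¹ * ‖x‖ ≤ 1
    rw [inv_mul_eq_div, div_le_iff₀ hR]; linarith
  have hwc : ∀ R : ℝ, ContDiff ℝ (⊤ : ℕ∞) (fun x : Euc n => η (R⁻¹ • x)) := fun R =>
    hη1.comp (contDiff_const_smul _)
  have hJi : ∀ R : ℝ, 0 < R → ∀ j : ℕ, j ≠ 0 → Integrable (fun x => u x ^ q * η (R⁻¹ • x) ^ j) := fun R hR j hj =>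
    aux_loc _ (fun x => η (R⁻¹ • x)) (2 * R) (huq (2*R) (by positivity)) (hwc R).continuous
      (fun x => hη3 _) (fun x => hη4 _) (hw0 R hR) j hj
  have hIi : ∀ R : ℝ, 0 < R → Integrable (fun x => u x * η (R⁻¹ • x) ^ k) := fun R hR =>
    aux_loc _ (fun x => η (R⁻¹ • x)) (2 * R) (hub (2*R)) (hwc R).continuous
      (fun x => hη3 _) (fun x => hη4 _) (hw0 R hR) k hk0
  have stepA : ∀ R : ℝ, 0 < R → ∫ x, u x ^ q * η (R⁻¹ • x) ^ (k+1) ≤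
      ∫ x, A * R ^ (-(2*s)) * (u x * η (R⁻¹ • x) ^ k) := by
    intro R hR
    refine (hsup (fun x => η (R⁻¹ • x) ^ (k+1)) ⟨(hwc R).pow _, ?_⟩
      (fun x => pow_nonneg (hη3 _) _)).trans ?_
    · apply HasCompactSupport.intro (isCompact_closedBall (0 : Euc n) (2 * R))
      intro x hx
      rw [hw0 R hR x (fun h => hx (ball_subset_closedBall h))]
      simp
    · apply aux_mono ((hIi R hR).const_mul _)
      · intro x
        have := hu0 x
        have := hη3 (R⁻¹ • x)
        positivity
      · intro x
        have := mul_le_mul_of_nonneg_left (hA R hR x) (hu0 x)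
        linarith
  have hball : ∀ R : ℝ, 0 < R → ∫ x in ball (0 : Euc n) R, u x ^ q ≤
      ∫ x, u x ^ q * η (R⁻¹ • x) ^ (k+1) := by
    intro R hR
    rw [← integral_indicator measurableSet_ball]
    apply integral_mono ((huq R hR).integrable_indicator measurableSet_ball) (hJi R hR _ (by simp))
    intro x
    by_cases hx : x ∈ ball (0 : Euc n) R
    · simp only [Set.indicator_of_mem hx]
      rw [hw1 R hR x hx]; simp
    · simp only [Set.indicator_of_notMem hx]
      exact mul_nonneg (hnn x) (pow_nonneg (hη3 _) _)
  have hci : ∀ (r c : ℝ), Integrable ((ball (0 : Euc n) r).indicator (fun _ => c)) volume := by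
    intro r c
    exact (integrableOn_const (by exact measure_ball_lt_top.ne)).integrable_indicator measurableSet_ball
  have hcv : ∀ (r c : ℝ), ∫ x, (ball (0 : Euc n) r).indicator (fun _ => c) x = volume.real (ball (0 : Euc n) r) * c := by
    intro r c
    rw [integral_indicator measurableSet_ball, setIntegral_const, smul_eq_mul]
  have stepB : ∀ R : ℝ, 1 ≤ R → ∫ x, u x ^ q * η (R⁻¹ • x) ^ (k+1) ≤ M := by
    intro R hR
    have hR0 : 0 < R := by linarith
    refine le_trans ?_ (hbM R hR)
    set B := A * R ^ (-(2*s)) with hB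
    have hB0 : 0 ≤ B := by positivity
    set J := ∫ x, u x ^ q * η (R⁻¹ • x) ^ (k+1) with hJ
    have key : J ≤ ∫ x, (q⁻¹ * (u x ^ q * η (R⁻¹ • x) ^ (k+1)) +
        (ball (0 : Euc n) (2*R)).indicator (fun _ => B ^ q' / q') x) := by
      refine (stepA R hR0).trans ?_
      apply integral_mono ((hIi R hR0).const_mul _)
        (((hJi R hR0 _ (by simp)).const_mul _).add (hci _ _))
      intro x
      simp only [Pi.add_apply]
      by_cases hx : x ∈ ball (0 : Euc n) (2*R)
      · simp only [Set.indicator_of_mem hx]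
        have hw := hη3 (R⁻¹ • x)
        have hy := Real.young_inequality_of_nonneg (mul_nonneg (hu0 x) (pow_nonneg hw k)) hB0 hpq
        rw [Real.mul_rpow (hu0 x) (pow_nonneg hw k), ← Real.rpow_natCast, ← Real.rpow_mul hw] at hy
        have : η (R⁻¹ • x) ^ (k * q) ≤ η (R⁻¹ • x) ^ (k+1) := by
          rw [← Real.rpow_natCast _ (k+1)]
          apply Real.rpow_le_rpow_of_exponent_ge_of_imp hw (hη4 _)
          · push_cast; exact hk1
          · intro _ h
            have : (0:ℝ) ≤ k := Nat.cast_nonneg k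
            linarith
        have h2 := mul_le_mul_of_nonneg_left this (hnn x)
        have h3 := div_le_div_of_nonneg_right h2 hpq.pos.le
        rw [Real.rpow_natCast] at hy
        rw [inv_mul_eq_div]
        linarith
      · simp only [Set.indicator_of_notMem hx]
        rw [hw0 R hR0 x hx]
        simp [hk0]
    rw [integral_add ((hJi R hR0 _ (by simp)).const_mul _) (hci _ _), integral_const_mul, hcv, ← hJ] at key
    have h1 := hpq.inv_add_inv_eq_one
    have h2 : q'⁻¹ * J ≤ q'⁻¹ * (B ^ q' * volume.real (ball (0 : Euc n) (2 * R))) := by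
      rw [div_eq_mul_inv] at key
      have : q'⁻¹ = 1 - q⁻¹ := by linarith
      rw [this] at key ⊢
      linarith
    exact le_of_mul_le_mul_left h2 (by positivity)
  have hint : Integrable (fun x => u x ^ q) volume := by
    have hc : AECover (volume : Measure (Euc n)) Filter.atTop (fun m : ℕ => ball (0 : Euc n) ((m : ℝ) + 1)) :=
      aecover_ball (Filter.tendsto_atTop_add_const_right _ _ tendsto_natCast_atTop_atTop)
    apply hc.integrable_of_integral_bounded_of_nonneg_ae M
    · intro m; exact huq _ (by positivity)
    · exact Filter.Eventually.of_forall hnn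
    · refine Filter.Eventually.of_forall fun m => ?_
      have hm : (0:ℝ) ≤ m := Nat.cast_nonneg m
      exact (hball _ (by positivity)).trans (stepB _ (by linarith))
  apply aux_final q q' s A M hs0 hq1 hq'0 u hu0 hint
  intro R hR ρ ε hε
  have hR0 : 0 < R := by linarith
  set B := A * R ^ (-(2*s)) with hB
  have hB0 : 0 ≤ B := by positivity
  have i1 : Integrable (fun x => B * (ball (0 : Euc n) ρ).indicator u x) :=
    ((hub ρ).integrable_indicator measurableSet_ball).const_mul B
  have i2 : Integrable (fun x => ε⁻¹ ^ q * (ball (0 : Euc n) ρ)ᶜ.indicator (fun x => u x ^ q) x) :=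
    (hint.indicator measurableSet_ball.compl).const_mul _
  have key : ∫ x in ball (0 : Euc n) R, u x ^ q ≤ ∫ x, (B * (ball (0 : Euc n) ρ).indicator u x +
      ε⁻¹ ^ q * (ball (0 : Euc n) ρ)ᶜ.indicator (fun x => u x ^ q) x +
      (ball (0 : Euc n) (2*R)).indicator (fun _ => ε ^ q' * B ^ q') x) := by
    refine (hball R hR0).trans ((stepA R hR0).trans ?_)
    apply integral_mono ((hIi R hR0).const_mul _) ((i1.add i2).add (hci _ _))
    intro x
    simp only [Pi.add_apply]
    have hw := hη3 (R⁻¹ • x)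
    have hux := hu0 x
    have hq0 : 0 < q := by linarith
    have hm0 : 0 ≤ (ball (0 : Euc n) (2*R)).indicator (fun _ => ε ^ q' * B ^ q') x :=
      Set.indicator_nonneg (fun _ _ => by positivity) x
    have hle : B * (u x * η (R⁻¹ • x) ^ k) ≤ B * u x := by
      apply mul_le_mul_of_nonneg_left _ hB0
      exact mul_le_of_le_one_right hux (pow_le_one₀ hw (hη4 _))
    by_cases hx : x ∈ ball (0 : Euc n) ρ
    · have hx' : x ∉ (ball (0 : Euc n) ρ)ᶜ := fun h => h hx
      simp only [Set.indicator_of_mem hx, Set.indicator_of_notMem hx']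
      linarith
    · have hx' : x ∈ (ball (0 : Euc n) ρ)ᶜ := hx
      simp only [Set.indicator_of_mem hx', Set.indicator_of_notMem hx]
      have hp : 0 ≤ ε⁻¹ ^ q * u x ^ q := by positivity
      by_cases hx2 : x ∈ ball (0 : Euc n) (2*R)
      · simp only [Set.indicator_of_mem hx2]
        have hy := Real.young_inequality_of_nonneg (a := ε⁻¹ * u x) (b := ε * B)
          (by positivity) (by positivity) hpq
        have e : ε⁻¹ * u x * (ε * B) = B * u x := by field_simp
        rw [e, Real.mul_rpow (by positivity) hux, Real.mul_rpow hε.le hB0] at hy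
        have h1 := div_le_self hp hq1.le
        have h2 := div_le_self (by positivity : 0 ≤ ε ^ q' * B ^ q') hq'1.le
        linarith
      · simp only [Set.indicator_of_notMem hx2]
        rw [hw0 R hR0 x hx2]
        simp only [ne_eq, hk0, not_false_eq_true, zero_pow, mul_zero]
        linarith
  have key2 := integral_add (i1.add i2) (hci (2*R) (ε ^ q' * B ^ q'))
  have key3 := integral_add i1 i2
  simp only [Pi.add_apply] at key2 key3
  rw [key2, key3, integral_const_mul, integral_const_mul, hcv, integral_indicator measurableSet_ball,
    integral_indicator measurableSet_ball.compl] at key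
  have h3 := mul_le_mul_of_nonneg_left (hbM R hR) (by positivity : 0 ≤ ε ^ q')
  linarith
end
end

section
/- Let n ≥ 1, s ∈ (0,1) with n > 2s, and let K be an admissible kernel. Assume 1 < q < n/(n−2s) (the subcritical range). Then every nonnegative weak supersolution u of L_K u = u^q in ℝⁿ satisfies u = 0 almost everywhere in ℝⁿ. -/
open MeasureTheory Metric

noncomputable section

theorem aux_pow_tangent (a b : ℝ) (ha : 0 ≤ a) (hb : 0 ≤ b) (k : ℕ) :
    a ^ (k + 1) - b ^ (k + 1) ≤ (k + 1) * a ^ k * (a - b) := by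
  induction k with
  | zero => simp
  | succ k ih =>
    have h1 : (b ^ (k + 1) - a ^ (k + 1)) * (a - b) ≤ 0 := by
      rcases le_total a b with h | h
      · have := pow_le_pow_left₀ ha h (k + 1)
        exact mul_nonpos_of_nonneg_of_nonpos (by linarith) (by linarith)
      · have := pow_le_pow_left₀ hb h (k + 1)
        exact mul_nonpos_of_nonpos_of_nonneg (by linarith) (by linarith)
    have h2 := mul_le_mul_of_nonneg_left ih ha
    push_cast
    have e1 : a ^ (k + 1 + 1) - b ^ (k + 1 + 1)
        = a * (a ^ (k + 1) - b ^ (k + 1)) + b ^ (k + 1) * (a - b) := by ring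
    have e2 : ((k : ℝ) + 1 + 1) * a ^ (k + 1) * (a - b)
        = a * ((k + 1) * a ^ k * (a - b)) + a ^ (k + 1) * (a - b) := by ring
    rw [e1, e2]
    linarith

theorem aux_second_diff {E : Type*} [NormedAddCommGroup E] [NormedSpace ℝ E] (η : E → ℝ) (h : ContDiff ℝ (⊤ : ℕ∞) η)
    (hc : HasCompactSupport η) :
    ∃ C : ℝ, 0 ≤ C ∧ ∀ x z, 2 * η x - η (x + z) - η (x - z) ≤ C * ‖z‖ ^ 2 := by
  have h1 : ContDiff ℝ 1 (fderiv ℝ η) := h.fderiv_right (by norm_cast)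
  obtain ⟨L, hL⟩ := ContDiff.lipschitzWith_of_hasCompactSupport (hc.fderiv ℝ) h1 one_ne_zero
  refine ⟨2 * L, by positivity, fun x z => ?_⟩
  have hd : Differentiable ℝ η := h.differentiable (by simp)
  have key := (convex_closedBall (0 : E) ‖z‖).norm_image_sub_le_of_norm_hasFDerivWithin_le
    (f := fun w => η (x + w) + η (x - w))
    (f' := fun w => fderiv ℝ η (x + w) - fderiv ℝ η (x - w)) (C := 2 * L * ‖z‖)
    (x := 0) (y := z) ?_ ?_ (by simp) (by simp)
  · simp only [add_zero, sub_zero] at key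
    have := neg_le_of_abs_le key
    nlinarith
  · intro w _
    have a1 : HasFDerivAt (fun w => η (x + w)) (fderiv ℝ η (x + w)) w := by
      have := (hd (x + w)).hasFDerivAt.comp w ((hasFDerivAt_id w).const_add x)
      rw [ContinuousLinearMap.comp_id] at this
      exact this
    have a2 : HasFDerivAt (fun w => η (x - w)) (-fderiv ℝ η (x - w)) w := by
      have := (hd (x - w)).hasFDerivAt.comp w ((hasFDerivAt_id w).const_sub x)
      rw [ContinuousLinearMap.comp_neg, ContinuousLinearMap.comp_id] at this
      exact this
    have := (a1.add a2).hasFDerivWithinAt (s := closedBall (0 : E) ‖z‖)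
    rw [sub_eq_add_neg]
    exact this
  · intro w hw
    have hw' : ‖w‖ ≤ ‖z‖ := by simpa using hw
    have := hL.dist_le_mul (x + w) (x - w)
    rw [dist_eq_norm, dist_eq_norm] at this
    have e : x + w - (x - w) = (2 : ℝ) • w := by rw [two_smul]; abel
    rw [e, norm_smul] at this
    calc _ ≤ _ := this
      _ = 2 * L * ‖w‖ := by simp; ring
      _ ≤ _ := by gcongr

theorem aux_integrable (n : ℕ) (hn : 1 ≤ n) (s : ℝ) (hs : s ∈ Set.Ioo (0 : ℝ) 1) (C : ℝ)
    (hC : 0 ≤ C) :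
    Integrable (fun z : Euc n => min (C * ‖z‖ ^ 2) 2 * ‖z‖ ^ (-(n : ℝ) - 2 * s)) := by
  have : Nontrivial (Euc n) := by
    have : Nonempty (Fin n) := ⟨⟨0, hn⟩⟩
    infer_instance
  have := (integrable_fun_norm_addHaar (volume : Measure (Euc n))
    (f := fun r : ℝ => min (C * r ^ 2) 2 * r ^ (-(n : ℝ) - 2 * s))).2 ?_
  · exact this
  have hm : Measurable (fun y : ℝ => y ^ (Module.finrank ℝ (Euc n) - 1) •
      (min (C * y ^ 2) 2 * y ^ (-(n : ℝ) - 2 * s))) := by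
    simp only [smul_eq_mul]
    fun_prop
  have hfr : Module.finrank ℝ (Euc n) = n := by simp
  rw [hfr] at hm ⊢
  have hpow : ∀ y : ℝ, 0 < y → y ^ (n - 1) * y ^ (-(n : ℝ) - 2 * s) = y ^ (-1 - 2 * s) := by
    intro y hy
    rw [← Real.rpow_natCast, ← Real.rpow_add hy]
    congr 1
    push_cast [hn]
    ring
  rw [← Set.Ioc_union_Ioi_eq_Ioi (zero_le_one' ℝ)]
  refine IntegrableOn.union ?_ ?_
  · have h1 : IntegrableOn (fun y : ℝ => C * y ^ (1 - 2 * s)) (Set.Ioc 0 1) := by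
      have := (intervalIntegral.intervalIntegrable_rpow' (a := 0) (b := 1) (r := 1 - 2 * s)
        (by linarith [hs.2])).1
      exact this.const_mul C
    refine Integrable.mono' h1 hm.aestronglyMeasurable ?_
    refine (ae_restrict_iff' measurableSet_Ioc).2 (Filter.Eventually.of_forall fun y hy => ?_)
    have hy0 := hy.1
    rw [Real.norm_of_nonneg (by positivity), smul_eq_mul]
    calc _ = min (C * y ^ 2) 2 * (y ^ (n - 1) * y ^ (-(n : ℝ) - 2 * s)) := by ring
      _ ≤ C * y ^ 2 * y ^ (-1 - 2 * s) := by
        rw [hpow y hy0]; gcongr; exact min_le_left _ _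
      _ = C * y ^ (1 - 2 * s) := by
        rw [mul_assoc, ← Real.rpow_natCast, ← Real.rpow_add hy0]
        congr 2; push_cast; ring
  · have h1 : IntegrableOn (fun y : ℝ => 2 * y ^ (-1 - 2 * s)) (Set.Ioi 1) :=
      (integrableOn_Ioi_rpow_of_lt (by linarith [hs.1]) one_pos).const_mul 2
    refine Integrable.mono' h1 hm.aestronglyMeasurable ?_
    refine (ae_restrict_iff' measurableSet_Ioi).2 (Filter.Eventually.of_forall fun y hy => ?_)
    have hy0 : 0 < y := one_pos.trans hy
    rw [Real.norm_of_nonneg (by positivity), smul_eq_mul]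
    calc _ = min (C * y ^ 2) 2 * (y ^ (n - 1) * y ^ (-(n : ℝ) - 2 * s)) := by ring
      _ ≤ 2 * y ^ (-1 - 2 * s) := by
        rw [hpow y hy0]; gcongr; exact min_le_right _ _

theorem aux_LK_bound (n : ℕ) (hn : 1 ≤ n) (s : ℝ) (hs : s ∈ Set.Ioo (0 : ℝ) 1)
    (lam Lam : ℝ) (K : Euc n → ℝ) (hK : IsAdmissibleKernel n s lam Lam K)
    (η : Euc n → ℝ) (h : ContDiff ℝ (⊤ : ℕ∞) η)
    (hc : HasCompactSupport η) (h01 : ∀ x, 0 ≤ η x ∧ η x ≤ 1) (k : ℕ) :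
    ∃ A : ℝ, 0 ≤ A ∧ ∀ R : ℝ, 0 < R → ∀ x,
      LK n K (fun x => η (R⁻¹ • x) ^ (k + 1)) x ≤ A * R ^ (-2 * s) * η (R⁻¹ • x) ^ k := by
  obtain ⟨C, hC, hC2⟩ := aux_second_diff η h hc
  obtain ⟨hl, hlL, -, -, hKb⟩ := hK
  have hg := aux_integrable n hn s hs C hC
  set g : Euc n → ℝ := fun z => min (C * ‖z‖ ^ 2) 2 * ‖z‖ ^ (-(n : ℝ) - 2 * s) with hgdef
  have hg0 : ∀ z, 0 ≤ g z := fun z => by simp only [hgdef]; positivity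
  have hI0 : 0 ≤ ∫ z, g z := integral_nonneg hg0
  have hL0 : 0 ≤ Lam := hl.le.trans hlL
  refine ⟨(1 / 2) * ((k + 1) * Lam * ∫ z, g z), by positivity, fun R hR x => ?_⟩
  set a := η (R⁻¹ • x) with ha
  have ha0 : 0 ≤ a := (h01 _).1
  have hRg : ∀ z, min (C * ‖R⁻¹ • z‖ ^ 2) 2 * ‖z‖ ^ (-(n : ℝ) - 2 * s)
      = R ^ (-(n : ℝ) - 2 * s) * g (R⁻¹ • z) := by
    intro z
    simp only [hgdef]
    have : ‖z‖ = R * ‖R⁻¹ • z‖ := by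
      rw [norm_smul, norm_inv, Real.norm_of_nonneg hR.le]; field_simp
    conv_lhs => rw [this, Real.mul_rpow hR.le (norm_nonneg _)]
    ring
  have hpt : ∀ z, (2 * η (R⁻¹ • x) ^ (k + 1) - η (R⁻¹ • (x + z)) ^ (k + 1)
      - η (R⁻¹ • (x - z)) ^ (k + 1)) * K z
      ≤ ((k + 1) * a ^ k * Lam * R ^ (-(n : ℝ) - 2 * s)) * g (R⁻¹ • z) := by
    intro z
    by_cases hz : z = 0
    · subst hz
      have : 0 ≤ ((k + 1) * a ^ k * Lam * R ^ (-(n : ℝ) - 2 * s)) * g (R⁻¹ • (0 : Euc n)) := by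
        have := hg0 (R⁻¹ • (0 : Euc n))
        positivity
      refine le_trans (le_of_eq ?_) this
      simp only [add_zero, sub_zero]; ring
    have hKz := (hKb z hz).2
    have hK0 : 0 ≤ K z := le_trans (by positivity) (hKb z hz).1
    have t1 := aux_pow_tangent a (η (R⁻¹ • (x + z))) ha0 (h01 _).1 k
    have t2 := aux_pow_tangent a (η (R⁻¹ • (x - z))) ha0 (h01 _).1 k
    have hmin : 2 * a - η (R⁻¹ • (x + z)) - η (R⁻¹ • (x - z)) ≤ min (C * ‖R⁻¹ • z‖ ^ 2) 2 := by
      refine le_min ?_ ?_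
      · have := hC2 (R⁻¹ • x) (R⁻¹ • z)
        rw [smul_add, smul_sub]; exact this
      · have h1 := (h01 (R⁻¹ • (x + z))).1
        have h2 := (h01 (R⁻¹ • (x - z))).1
        have h3 := (h01 (R⁻¹ • x)).2
        linarith
    have hm0 : 0 ≤ min (C * ‖R⁻¹ • z‖ ^ 2) 2 := by positivity
    calc _ ≤ ((k + 1) * a ^ k * (2 * a - η (R⁻¹ • (x + z)) - η (R⁻¹ • (x - z)))) * K z := by
            refine mul_le_mul_of_nonneg_right ?_ hK0
            rw [← ha]; linarith
      _ ≤ ((k + 1) * a ^ k * min (C * ‖R⁻¹ • z‖ ^ 2) 2) * K z := by gcongr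
      _ ≤ ((k + 1) * a ^ k * min (C * ‖R⁻¹ • z‖ ^ 2) 2) *
          (Lam * ‖z‖ ^ (-(n : ℝ) - 2 * s)) := by gcongr
      _ = ((k + 1) * a ^ k * Lam) *
          (min (C * ‖R⁻¹ • z‖ ^ 2) 2 * ‖z‖ ^ (-(n : ℝ) - 2 * s)) := by ring
      _ = _ := by rw [hRg]; ring
  have hgi : Integrable (fun z => g (R⁻¹ • z)) := hg.comp_smul (inv_ne_zero hR.ne')
  have hval : ∫ z, g (R⁻¹ • z) = R ^ n * ∫ z, g z := by
    have := Measure.integral_comp_inv_smul_of_nonneg (volume : Measure (Euc n)) g hR.le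
    simpa using this
  have hRR : R ^ (-(n : ℝ) - 2 * s) * R ^ n = R ^ (-2 * s) := by
    rw [← Real.rpow_natCast, ← Real.rpow_add hR]; congr 1; ring
  unfold LK
  have hmain : ∫ z : Euc n, (2 * η (R⁻¹ • x) ^ (k + 1) - η (R⁻¹ • (x + z)) ^ (k + 1)
      - η (R⁻¹ • (x - z)) ^ (k + 1)) * K z ≤ ((k + 1) * Lam * ∫ z, g z) * R ^ (-2 * s) * a ^ k := by
    by_cases hi : Integrable (fun z : Euc n => (2 * η (R⁻¹ • x) ^ (k + 1)
        - η (R⁻¹ • (x + z)) ^ (k + 1) - η (R⁻¹ • (x - z)) ^ (k + 1)) * K z)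
    · refine (integral_mono hi (hgi.const_mul _) hpt).trans (le_of_eq ?_)
      rw [integral_const_mul, hval, ← hRR]; ring
    · rw [integral_undef hi]; positivity
  calc _ ≤ (1 / 2) * (((k + 1) * Lam * ∫ z, g z) * R ^ (-2 * s) * a ^ k) :=
        mul_le_mul_of_nonneg_left hmain (by norm_num)
    _ = _ := by ring

/-- Liouville theorem in the subcritical range `1 < q < n/(n-2s)`. -/
theorem liouville_subcritical
    (n : ℕ) (hn : 1 ≤ n) (s : ℝ) (hs : s ∈ Set.Ioo (0 : ℝ) 1)
    (hns : 2 * s < (n : ℝ))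
    (lam Lam : ℝ) (K : Euc n → ℝ) (hK : IsAdmissibleKernel n s lam Lam K)
    (q : ℝ) (hq1 : 1 < q) (hq2 : q < (n : ℝ) / ((n : ℝ) - 2 * s))
    (u : Euc n → ℝ) (hu : IsWeakSupersol n s q K u) :
    ∀ᵐ x : Euc n, u x = 0 := by

  obtain ⟨hum, hu0, huq, -, hsup⟩ := hu
  let b : ContDiffBump (0 : Euc n) := ⟨1, 2, one_pos, one_lt_two⟩
  let η : Euc n → ℝ := b
  have hη : ContDiff ℝ (⊤ : ℕ∞) η := b.contDiff
  have hηc : HasCompactSupport η := b.hasCompactSupport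
  have h01 : ∀ x, 0 ≤ η x ∧ η x ≤ 1 := fun x => ⟨b.nonneg, b.le_one⟩
  have hη1 : ∀ x, ‖x‖ ≤ 1 → η x = 1 := fun x hx =>
    b.one_of_mem_closedBall (by simpa [b] using hx)
  have hη0 : ∀ x, 2 ≤ ‖x‖ → η x = 0 := fun x hx =>
    b.zero_of_le_dist (by simpa [b] using hx)
  obtain ⟨k, hk⟩ := exists_nat_gt (1 / (q - 1))
  have hq0 : 0 < q - 1 := by linarith
  have hk0 : (0 : ℝ) < k := lt_trans (by positivity) hk
  have hkn : k ≠ 0 := by rintro rfl; simp at hk0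
  have hkq : (k : ℝ) + 1 ≤ k * q := by
    rw [div_lt_iff₀ hq0] at hk; linarith
  obtain ⟨A, hA, hLK⟩ := aux_LK_bound n hn s hs lam Lam K hK η hη hηc h01 k
  have hpq := Real.HolderConjugate.conjExponent hq1
  set p := q.conjExponent with hp
  set V := volume.real (ball (0 : Euc n) 2) with hV
  have hp0 : 0 < p := hpq.symm.pos
  have hqp : 0 < q := hpq.pos
  -- integrability of the test integrand
  have hball : ∀ R : ℝ, 0 < R → ∀ x : Euc n, x ∉ ball (0 : Euc n) (2 * R) → η (R⁻¹ • x) = 0 := by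
    intro R hR x hx
    apply hη0
    rw [norm_smul, norm_inv, Real.norm_of_nonneg hR.le]
    have : 2 * R ≤ ‖x‖ := by simpa using hx
    rw [inv_mul_eq_div, le_div_iff₀ hR]; exact this
  have hXint : ∀ R : ℝ, 0 < R → Integrable (fun x => u x ^ q * η (R⁻¹ • x) ^ (k + 1)) := by
    intro R hR
    have h1 := (integrable_indicator_iff measurableSet_ball).2 (huq (2 * R) (by positivity))
    refine h1.mono' ?_ (Filter.Eventually.of_forall fun x => ?_)
    · have : Measurable (fun x => η (R⁻¹ • x)) :=
        hη.continuous.measurable.comp (measurable_const_smul _)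
      exact ((hum.pow_const q).mul (this.pow_const _)).aestronglyMeasurable
    · have hn0 := Real.rpow_nonneg (hu0 x) q
      have hx0 := pow_nonneg (h01 (R⁻¹ • x)).1 (k + 1)
      rw [Real.norm_of_nonneg (by positivity)]
      by_cases hx : x ∈ ball (0 : Euc n) (2 * R)
      · rw [Set.indicator_of_mem hx]
        exact mul_le_of_le_one_right hn0 (pow_le_one₀ (h01 _).1 (h01 _).2)
      · rw [Set.indicator_of_notMem hx, hball R hR x hx]; simp
  have hvol : ∀ R : ℝ, 0 < R → volume.real (ball (0 : Euc n) (2 * R)) = R ^ n * V := by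
    intro R hR
    rw [hV, Measure.real, Measure.real, mul_comm 2 R,
      Measure.addHaar_ball_mul_of_pos volume (0 : Euc n) hR 2, ENNReal.toReal_mul,
      ENNReal.toReal_ofReal (by positivity)]
    simp
  have hX : ∀ R : ℝ, 0 < R → ∫ x, u x ^ q * η (R⁻¹ • x) ^ (k + 1)
      ≤ (A * R ^ (-2 * s)) ^ p * (R ^ n * V) := by
    intro R hR
    set D := A * R ^ (-2 * s) with hD
    have hD0 : 0 ≤ D := by positivity
    have hV0 : 0 ≤ V := measureReal_nonneg
    have htest : IsTestFun n (fun x => η (R⁻¹ • x) ^ (k + 1)) := by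
      constructor
      · exact (hη.comp (contDiff_const_smul _)).pow _
      · refine HasCompactSupport.of_support_subset_isCompact
          (isCompact_closedBall (0 : Euc n) (2 * R)) fun x hx => ?_
        by_contra hx'
        have : x ∉ ball (0 : Euc n) (2 * R) := fun h => hx' (ball_subset_closedBall h)
        apply hx
        simp [hball R hR x this]
    have hle := hsup _ htest (fun x => pow_nonneg (h01 _).1 _)
    by_cases hi : Integrable (fun x => u x * LK n K (fun x => η (R⁻¹ • x) ^ (k + 1)) x)
    swap
    · rw [integral_undef hi] at hle
      exact hle.trans (by positivity)
    have hpt : ∀ x, u x * LK n K (fun x => η (R⁻¹ • x) ^ (k + 1)) x ≤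
        q⁻¹ * (u x ^ q * η (R⁻¹ • x) ^ (k + 1))
          + (ball (0 : Euc n) (2 * R)).indicator (fun _ => D ^ p / p) x := by
      intro x
      have h1 := mul_le_mul_of_nonneg_left (hLK R hR x) (hu0 x)
      rw [← hD] at h1
      refine h1.trans ?_
      by_cases hx : x ∈ ball (0 : Euc n) (2 * R)
      · rw [Set.indicator_of_mem hx]
        set e := η (R⁻¹ • x)
        have he0 : 0 ≤ e := (h01 _).1
        have hY := Real.young_inequality_of_nonneg
          (mul_nonneg (hu0 x) (pow_nonneg he0 k)) hD0 hpq
        have h2 : (u x * e ^ k) ^ q ≤ u x ^ q * e ^ (k + 1) := by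
          rw [Real.mul_rpow (hu0 x) (pow_nonneg he0 k)]
          refine mul_le_mul_of_nonneg_left ?_ (Real.rpow_nonneg (hu0 x) q)
          rw [← Real.rpow_natCast e k, ← Real.rpow_mul he0, ← Real.rpow_natCast e (k + 1)]
          apply Real.rpow_le_rpow_of_exponent_ge' he0 (h01 _).2 (by positivity)
          push_cast; exact hkq
        have h3 : (u x * e ^ k) ^ q / q ≤ q⁻¹ * (u x ^ q * e ^ (k + 1)) := by
          rw [inv_mul_eq_div]; gcongr
        calc _ = u x * e ^ k * D := by ring
          _ ≤ _ := by linarith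
      · rw [Set.indicator_of_notMem hx, hball R hR x hx]; simp [hkn]
    have hind : Integrable ((ball (0 : Euc n) (2 * R)).indicator (fun _ => D ^ p / p)) :=
      (integrable_indicator_iff measurableSet_ball).2
        (integrableOn_const measure_ball_lt_top.ne)
    have hmono := integral_mono hi (((hXint R hR).const_mul q⁻¹).add hind) hpt
    have hval : ∫ x, (q⁻¹ * (u x ^ q * η (R⁻¹ • x) ^ (k + 1))
          + (ball (0 : Euc n) (2 * R)).indicator (fun _ => D ^ p / p) x)
        = q⁻¹ * (∫ x, u x ^ q * η (R⁻¹ • x) ^ (k + 1)) + R ^ n * V * (D ^ p / p) := by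
      rw [integral_add ((hXint R hR).const_mul q⁻¹) hind, integral_const_mul,
        integral_indicator measurableSet_ball, setIntegral_const, hvol R hR, smul_eq_mul]
    have hfin := hle.trans (hmono.trans hval.le)
    set X := ∫ x, u x ^ q * η (R⁻¹ • x) ^ (k + 1)
    have hsum := hpq.inv_add_inv_eq_one
    have h5 : p⁻¹ * X ≤ p⁻¹ * (D ^ p * (R ^ n * V)) := by
      have e1 : p⁻¹ = 1 - q⁻¹ := by linarith
      calc p⁻¹ * X = X - q⁻¹ * X := by rw [e1]; ring
        _ ≤ R ^ n * V * (D ^ p / p) := by linarith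
        _ = _ := by rw [div_eq_mul_inv]; ring
    exact le_of_mul_le_mul_left h5 (by positivity)
  -- the exponent is negative
  have hexp : (n : ℝ) - 2 * s * p < 0 := by
    have hns' : 0 < (n : ℝ) - 2 * s := by linarith
    rw [lt_div_iff₀ hns'] at hq2
    have : p = q / (q - 1) := rfl
    rw [this, sub_neg, ← mul_div_assoc, lt_div_iff₀ hq0]
    linarith
  have hlim : Filter.Tendsto (fun R : ℝ => A ^ p * V * R ^ ((n : ℝ) - 2 * s * p))
      Filter.atTop (nhds 0) := by
    have := (tendsto_rpow_neg_atTop (y := -((n : ℝ) - 2 * s * p)) (by linarith)).const_mul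
      (A ^ p * V)
    simpa using this
  have hzero : ∀ r : ℝ, 0 < r → ∀ᵐ x ∂(volume.restrict (ball (0 : Euc n) r)), u x = 0 := by
    intro r hr
    have hle0 : ∫ x in ball (0 : Euc n) r, u x ^ q ≤ 0 := by
      refine ge_of_tendsto hlim ?_
      filter_upwards [Filter.eventually_ge_atTop r] with R hRr
      have hR : 0 < R := hr.trans_le hRr
      have h1 : ∫ x in ball (0 : Euc n) r, u x ^ q
          ≤ ∫ x, u x ^ q * η (R⁻¹ • x) ^ (k + 1) := by
        rw [← integral_indicator measurableSet_ball]
        refine integral_mono ((integrable_indicator_iff measurableSet_ball).2 (huq r hr))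
          (hXint R hR) fun x => ?_
        by_cases hx : x ∈ ball (0 : Euc n) r
        · have : η (R⁻¹ • x) = 1 := by
            apply hη1
            rw [norm_smul, norm_inv, Real.norm_of_nonneg hR.le, inv_mul_eq_div,
              div_le_one hR]
            have : ‖x‖ < r := by simpa using hx
            linarith
          simp only [Set.indicator_of_mem hx, this]; simp
        · simp only [Set.indicator_of_notMem hx]
          exact mul_nonneg (Real.rpow_nonneg (hu0 x) q) (pow_nonneg (h01 _).1 _)
      refine h1.trans ((hX R hR).trans (le_of_eq ?_))
      rw [Real.mul_rpow hA (by positivity), ← Real.rpow_mul hR.le, ← Real.rpow_natCast R n]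
      calc _ = A ^ p * V * (R ^ (n : ℝ) * R ^ (-2 * s * p)) := by ring
        _ = _ := by rw [← Real.rpow_add hR]; congr 2; ring
    have heq : ∫ x in ball (0 : Euc n) r, u x ^ q = 0 :=
      le_antisymm hle0 (integral_nonneg fun x => Real.rpow_nonneg (hu0 x) q)
    have := (integral_eq_zero_iff_of_nonneg (fun x => Real.rpow_nonneg (hu0 x) q)
      (huq r hr)).1 heq
    filter_upwards [this] with x hx
    exact (Real.rpow_eq_zero (hu0 x) hqp.ne').1 hx
  have hall : ∀ᵐ x : Euc n, ∀ N : ℕ, x ∈ ball (0 : Euc n) ((N : ℝ) + 1) → u x = 0 := by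
    rw [ae_all_iff]
    intro N
    exact (ae_restrict_iff' measurableSet_ball).1 (hzero _ (by positivity))
  filter_upwards [hall] with x hx
  obtain ⟨N, hN⟩ := exists_nat_gt ‖x‖
  exact hx N (by simp; linarith)
end
end

section
/- Let n ≥ 1, s ∈ (0,1) with n > 2s, and let K be an admissible kernel. Assume q = n/(n−2s) (the critical Serrin exponent). Then every nonnegative weak supersolution u of L_K u = u^q in ℝⁿ satisfies u = 0 almost everywhere in ℝⁿ. -/
open MeasureTheory Metric

noncomputable section

lemma second_diff (n : ℕ) (η : Euc n → ℝ) (h : ContDiff ℝ (⊤ : ℕ∞) η) (hc : HasCompactSupport η)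
    (h0 : ∀ x, 0 ≤ η x) (h1 : ∀ x, η x ≤ 1) :
    ∃ C : ℝ, 0 < C ∧ ∀ x z, 2 * η x - η (x + z) - η (x - z) ≤ C * min 1 (‖z‖ ^ 2) := by
  have hd : ContDiff ℝ 1 (fderiv ℝ η) := h.fderiv_right (by norm_cast)
  obtain ⟨D, hD⟩ := hd.lipschitzWith_of_hasCompactSupport (hc.fderiv ℝ) one_ne_zero
  have hdiff : Differentiable ℝ η := h.differentiable (by simp)
  refine ⟨2 * D + 2, by positivity, fun x z => ?_⟩
  have key : 2 * η x - η (x + z) - η (x - z) ≤ (2 * D) * ‖z‖ ^ 2 := by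
    let g : Euc n → ℝ := fun w => 2 * η x - η (x + w) - η (x - w)
    have hg : ∀ w, HasFDerivAt g (-(fderiv ℝ η (x + w)) + fderiv ℝ η (x - w)) w := by
      intro w
      have a1 : HasFDerivAt (fun w => η (x + w)) (fderiv ℝ η (x + w)) w := by
        have := (hdiff (x + w)).hasFDerivAt.comp w ((hasFDerivAt_id w).const_add x)
        simp at this
        exact this
      have a2 : HasFDerivAt (fun w => η (x - w)) (-(fderiv ℝ η (x - w))) w := by
        have := (hdiff (x - w)).hasFDerivAt.comp w ((hasFDerivAt_id w).const_sub x)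
        simp at this
        exact this
      have := (a1.const_sub (2 * η x)).sub a2
      simp at this
      exact this
    have := (convex_segment (0 : Euc n) z).norm_image_sub_le_of_norm_hasFDerivWithin_le
      (f := g) (C := 2 * D * ‖z‖) (fun w _ => (hg w).hasFDerivWithinAt) (fun w hw => by
        have hwz : ‖w‖ ≤ ‖z‖ := by
          obtain ⟨a, b, ha, hb, hab, rfl⟩ := hw
          simp only [smul_zero, zero_add, norm_smul, Real.norm_eq_abs, abs_of_nonneg hb]
          nlinarith [norm_nonneg z]
        have := hD.dist_le_mul (x - w) (x + w)
        rw [dist_eq_norm, dist_eq_norm] at this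
        have e : (x - w) - (x + w) = -((2:ℝ) • w) := by
          rw [two_smul]; abel
        rw [e, norm_neg, norm_smul] at this
        rw [neg_add_eq_sub]
        refine this.trans ?_
        have hD0 : (0:ℝ) ≤ D := D.2
        simp only [Real.norm_ofNat]
        nlinarith [mul_le_mul_of_nonneg_left hwz hD0])
      (left_mem_segment ℝ 0 z) (right_mem_segment ℝ 0 z)
    have e0 : g 0 = 0 := by simp [g]; ring
    rw [e0, sub_zero, sub_zero] at this
    have := (Real.le_norm_self _).trans this
    simp only [g] at this
    linarith [pow_two ‖z‖]
  have hD0 : (0:ℝ) ≤ D := D.2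
  rcases le_total (1:ℝ) (‖z‖^2) with h' | h'
  · rw [min_eq_left h']
    linarith [h0 (x+z), h0 (x-z), h1 x]
  · rw [min_eq_right h']
    nlinarith [sq_nonneg ‖z‖]

def Gker (n : ℕ) (s : ℝ) (z : Euc n) : ℝ := min 1 (‖z‖ ^ 2) * ‖z‖ ^ (-(n : ℝ) - 2 * s)

lemma Gker_nonneg (n : ℕ) (s : ℝ) (z : Euc n) : 0 ≤ Gker n s z := by
  unfold Gker; positivity

lemma Gker_int (n : ℕ) (hn : 1 ≤ n) (s : ℝ) (hs : s ∈ Set.Ioo (0 : ℝ) 1) :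
    Integrable (Gker n s) volume := by
  have : Nonempty (Fin n) := ⟨⟨0, hn⟩⟩
  have := (integrable_fun_norm_addHaar (volume : Measure (Euc n))
    (f := fun y : ℝ => min 1 (y ^ 2) * y ^ (-(n : ℝ) - 2 * s)))
  refine this.2 ?_
  simp only [finrank_euclideanSpace, Fintype.card_fin, smul_eq_mul]
  rw [← Set.Ioc_union_Ioi_eq_Ioi (zero_le_one' ℝ)]
  have e : ∀ y : ℝ, 0 < y → y ^ (n - 1) * y ^ (-(n : ℝ) - 2 * s) = y ^ (-1 - 2 * s) := by
    intro y hy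
    rw [← Real.rpow_natCast, ← Real.rpow_add hy]
    congr 1
    push_cast [Nat.cast_sub hn]; ring
  refine IntegrableOn.union ?_ ?_
  · have h1 : IntegrableOn (fun y : ℝ => y ^ (1 - 2 * s)) (Set.Ioc 0 1) volume := by
      rw [← intervalIntegrable_iff_integrableOn_Ioc_of_le zero_le_one]
      exact intervalIntegral.intervalIntegrable_rpow' (by linarith [hs.2])
    refine h1.congr_fun (fun y hy => ?_) measurableSet_Ioc
    have h2 : y ^ 2 ≤ 1 := by nlinarith [hy.1, hy.2]
    simp only [min_eq_right h2]
    rw [mul_left_comm, e y hy.1, ← Real.rpow_natCast, ← Real.rpow_add hy.1]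
    congr 1
    push_cast; ring
  · have h1 : IntegrableOn (fun y : ℝ => y ^ (-1 - 2 * s)) (Set.Ioi 1) volume :=
      integrableOn_Ioi_rpow_of_lt (by linarith [hs.1]) one_pos
    refine h1.congr_fun (fun y hy => ?_) measurableSet_Ioi
    have hy1 : 1 < y := hy
    have h2 : 1 ≤ y ^ 2 := by nlinarith
    simp only [min_eq_left h2, one_mul]
    rw [e y (by linarith)]

lemma pow_conv (m : ℕ) (a b : ℝ) (ha : 0 ≤ a) (hb : 0 ≤ b) :
    a ^ m - b ^ m ≤ m * a ^ (m - 1) * (a - b) := by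
  rcases m with _ | k
  · simp
  have key : ∀ k : ℕ, a ^ (k+1) - b ^ (k+1) ≤ (k+1) * a ^ k * (a - b) := by
    intro k
    induction k with
    | zero => simp
    | succ k ih =>
      have h2 : 0 ≤ (a ^ (k+1) - b ^ (k+1)) * (a - b) := by
        rcases le_total a b with h | h
        · exact mul_nonneg_of_nonpos_of_nonpos (sub_nonpos.2 (pow_le_pow_left₀ ha h _)) (by linarith)
        · exact mul_nonneg (sub_nonneg.2 (pow_le_pow_left₀ hb h _)) (by linarith)
      have h3 := mul_le_mul_of_nonneg_left ih ha
      have e1 : a ^ (k+1+1) = a * a^(k+1) := by ring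
      have e2 : b ^ (k+1+1) = b * b^(k+1) := by ring
      have e3 : a * ((k+1) * a ^ k * (a - b)) = (k+1) * a ^ (k+1) * (a - b) := by ring
      push_cast
      nlinarith
  simpa using key k

lemma LK_bound (n : ℕ) (hn : 1 ≤ n) (s : ℝ) (hs : s ∈ Set.Ioo (0 : ℝ) 1)
    (lam Lam : ℝ) (K : Euc n → ℝ) (hK : IsAdmissibleKernel n s lam Lam K) (m : ℕ)
    (η : Euc n → ℝ) (h : ContDiff ℝ (⊤ : ℕ∞) η) (hc : HasCompactSupport η)
    (h0 : ∀ x, 0 ≤ η x) (h1 : ∀ x, η x ≤ 1) :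
    ∃ C : ℝ, 0 ≤ C ∧ ∀ R : ℝ, 0 < R → ∀ x,
      LK n K (fun y => η (R⁻¹ • y) ^ m) x ≤ C * R ^ (-(2 * s)) * η (R⁻¹ • x) ^ (m - 1) := by
  obtain ⟨C, hC, hC2⟩ := second_diff n η h hc h0 h1
  obtain ⟨hl, hlL, hKm, hKe, hKb⟩ := hK
  have hL : 0 < Lam := hl.trans_le hlL
  have : Nonempty (Fin n) := ⟨⟨0, hn⟩⟩
  have hG0 : 0 ≤ ∫ z, Gker n s z := integral_nonneg (Gker_nonneg n s)
  refine ⟨m * C * Lam * (∫ z, Gker n s z), by positivity, fun R hR x => ?_⟩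
  set e := η (R⁻¹ • x) with he
  have he0 : 0 ≤ e := h0 _
  have hGR : Integrable (fun z => Gker n s (R⁻¹ • z)) volume :=
    (Gker_int n hn s hs).comp_smul (inv_ne_zero hR.ne')
  set B := m * e ^ (m-1) * C * Lam * R ^ (-(n:ℝ) - 2 * s) with hB
  have hB0 : 0 ≤ B := by positivity
  have hint : ∫ z, B * Gker n s (R⁻¹ • z) = m * C * Lam * (∫ z, Gker n s z) * R ^ (-(2 * s)) * e ^ (m-1) := by
    rw [integral_const_mul, Measure.integral_comp_inv_smul_of_nonneg _ _ hR.le]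
    simp only [finrank_euclideanSpace, Fintype.card_fin, smul_eq_mul, hB]
    have : R ^ (-(2 * s)) = R ^ (-(n:ℝ) - 2 * s) * R ^ n := by
      rw [← Real.rpow_natCast, ← Real.rpow_add hR]; congr 1; ring
    rw [this]; ring
  have hI0 : 0 ≤ ∫ z, B * Gker n s (R⁻¹ • z) :=
    integral_nonneg fun z => mul_nonneg hB0 (Gker_nonneg n s _)
  have main : ∫ z : Euc n, (2 * e ^ m - η (R⁻¹ • (x + z)) ^ m - η (R⁻¹ • (x - z)) ^ m) * K z
      ≤ ∫ z, B * Gker n s (R⁻¹ • z) := by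
    by_cases hi : Integrable (fun z : Euc n =>
        (2 * e ^ m - η (R⁻¹ • (x + z)) ^ m - η (R⁻¹ • (x - z)) ^ m) * K z) volume
    · refine integral_mono_ae hi (hGR.const_mul B) ?_
      have hz : ∀ᵐ z : Euc n, z ≠ 0 := by
        exact Measure.ae_ne volume 0
      filter_upwards [hz] with z hz
      obtain ⟨hK1, hK2⟩ := hKb z hz
      have hzp : 0 < ‖z‖ := norm_pos_iff.2 hz
      have hK0 : 0 ≤ K z := le_trans (by positivity) hK1
      have c1 := pow_conv m e (η (R⁻¹ • (x + z))) he0 (h0 _)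
      have c2 := pow_conv m e (η (R⁻¹ • (x - z))) he0 (h0 _)
      have c3 := hC2 (R⁻¹ • x) (R⁻¹ • z)
      rw [← smul_add, ← smul_sub, ← he] at c3
      set M := min 1 (‖R⁻¹ • z‖ ^ 2) with hM
      have hM0 : 0 ≤ M := by positivity
      have c4 : 2 * e ^ m - η (R⁻¹ • (x + z)) ^ m - η (R⁻¹ • (x - z)) ^ m
          ≤ m * e ^ (m-1) * (C * M) := by
        have := mul_le_mul_of_nonneg_left c3 (show 0 ≤ m * e ^ (m-1) by positivity)
        linarith
      have c5 : R ^ (-(n:ℝ) - 2 * s) * ‖R⁻¹ • z‖ ^ (-(n:ℝ) - 2 * s) = ‖z‖ ^ (-(n:ℝ) - 2 * s) := by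
        rw [← Real.mul_rpow hR.le (norm_nonneg _), norm_smul, norm_inv, Real.norm_of_nonneg hR.le,
          mul_inv_cancel_left₀ hR.ne']
      calc _ ≤ m * e ^ (m-1) * (C * M) * K z := mul_le_mul_of_nonneg_right c4 hK0
        _ ≤ m * e ^ (m-1) * (C * M) * (Lam * ‖z‖ ^ (-(n:ℝ) - 2 * s)) :=
          mul_le_mul_of_nonneg_left hK2 (by positivity)
        _ = B * Gker n s (R⁻¹ • z) := by
          rw [← c5, hB, Gker, ← hM]; ring
    · rw [integral_undef hi]; exact hI0
  rw [hint] at main hI0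
  unfold LK
  simp only [← he]
  linarith

lemma young_t (q p : ℝ) (hqp : q.HolderConjugate p) (a v t : ℝ) (ha : 0 ≤ a) (hv : 0 ≤ v)
    (ht : 0 < t) : a * v ≤ t ^ (-q) * v ^ q + t ^ p * a ^ p := by
  have h := Real.young_inequality_of_nonneg (a := t⁻¹ * v) (b := t * a) (by positivity)
    (by positivity) hqp
  have e : t⁻¹ * v * (t * a) = a * v := by field_simp
  rw [e, Real.mul_rpow (by positivity) hv, Real.mul_rpow ht.le ha, Real.inv_rpow ht.le,
    ← Real.rpow_neg ht.le] at h
  refine h.trans (add_le_add (div_le_self (by positivity) hqp.lt.le)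
    (div_le_self (by positivity) hqp.symm.lt.le))

set_option maxHeartbeats 2000000 in
open Filter Topology in
/-- Liouville theorem at the critical Serrin exponent `q = n/(n-2s)`. -/
theorem liouville_critical
    (n : ℕ) (hn : 1 ≤ n) (s : ℝ) (hs : s ∈ Set.Ioo (0 : ℝ) 1)
    (hns : 2 * s < (n : ℝ))
    (lam Lam : ℝ) (K : Euc n → ℝ) (hK : IsAdmissibleKernel n s lam Lam K)
    (q : ℝ) (hq : q = (n : ℝ) / ((n : ℝ) - 2 * s))
    (u : Euc n → ℝ) (hu : IsWeakSupersol n s q K u) :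
    ∀ᵐ x : Euc n, u x = 0 := by
  have : Nonempty (Fin n) := ⟨⟨0, hn⟩⟩
  obtain ⟨hum, hu0, huq, ⟨huloc, -⟩, husup⟩ := hu
  have hs0 := hs.1
  have hn0 : (0:ℝ) < n := by exact_mod_cast hn
  have hd0 : 0 < (n:ℝ) - 2 * s := by linarith
  have hq1 : 1 < q := by rw [hq, one_lt_div hd0]; linarith
  have hq0 : 0 < q := by linarith
  set p : ℝ := n / (2 * s) with hp
  have hqp : q.HolderConjugate p := by
    rw [Real.holderConjugate_iff]
    refine ⟨hq1, ?_⟩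
    rw [hq, hp]; field_simp; ring
  have hp1 : 1 < p := hqp.symm.lt
  have hp0 : 0 < p := by linarith
  obtain ⟨k, hk⟩ := exists_nat_gt p
  set m : ℕ := k + 1 with hm
  have hk1 : 1 < (k:ℝ) := hp1.trans hk
  have hk0 : k ≠ 0 := by rintro rfl; norm_num at hk1
  have hmq : ((m:ℕ):ℝ) ≤ k * q := by
    have h1 : q + p = q * p := by
      have := hqp.inv_add_inv_eq_one
      field_simp at this
      linarith
    rw [hm]; push_cast
    nlinarith
  let b : ContDiffBump (0 : Euc n) := ⟨1, 2, one_pos, one_lt_two⟩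
  obtain ⟨η, hη⟩ : ∃ η : Euc n → ℝ, η = fun x => b x := ⟨_, rfl⟩
  have hηc : ContDiff ℝ (⊤ : ℕ∞) η := hη ▸ b.contDiff
  have hηs : HasCompactSupport η := hη ▸ b.hasCompactSupport
  have hη0 : ∀ x, 0 ≤ η x := fun x => hη ▸ b.nonneg
  have hη1 : ∀ x, η x ≤ 1 := fun x => hη ▸ b.le_one
  have hηin : ∀ x, ‖x‖ ≤ 1 → η x = 1 := fun x hx =>
    hη ▸ b.one_of_mem_closedBall (by simpa using hx)
  have hηout : ∀ x, 2 ≤ ‖x‖ → η x = 0 := fun x hx =>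
    hη ▸ b.zero_of_le_dist (by simpa using hx)
  obtain ⟨C, hC, hLK⟩ := LK_bound n hn s hs lam Lam K hK m η hηc hηs hη0 hη1
  have hmk : m - 1 = k := by simp [hm]
  rw [hmk] at hLK
  have hin : ∀ R : ℝ, 0 < R → ∀ x : Euc n, x ∈ ball (0 : Euc n) R → η (R⁻¹ • x) = 1 := by
    intro R hR x hx
    apply hηin
    rw [norm_smul, norm_inv, Real.norm_of_nonneg hR.le, inv_mul_le_iff₀ hR]
    simpa using (mem_ball_zero_iff.1 hx).le
  have hout : ∀ R : ℝ, 0 < R → ∀ x : Euc n, x ∉ closedBall (0 : Euc n) (2 * R) →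
      η (R⁻¹ • x) = 0 := by
    intro R hR x hx
    apply hηout
    rw [mem_closedBall_zero_iff, not_le] at hx
    rw [norm_smul, norm_inv, Real.norm_of_nonneg hR.le, le_inv_mul_iff₀ hR]
    linarith
  have hcR : ∀ R : ℝ, Measurable (fun x : Euc n => η (R⁻¹ • x)) := by
    intro R
    exact (hηc.continuous.comp (continuous_const_smul _)).measurable
  have huqm : Measurable (fun x => u x ^ q) := hum.pow_const q
  have huq0 : ∀ x, 0 ≤ u x ^ q := fun x => Real.rpow_nonneg (hu0 x) q
  have huR : ∀ R : ℝ, IntegrableOn u (closedBall (0 : Euc n) R) volume := fun R =>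
    huloc.integrableOn_isCompact (isCompact_closedBall _ _)
  have huqR : ∀ R : ℝ, 0 < R → IntegrableOn (fun x => u x ^ q) (closedBall (0 : Euc n) R) volume :=
    fun R hR => (huq (R + 1) (by linarith)).mono_set (closedBall_subset_ball (by linarith))
  -- integrability of cut-off functions
  have hint : ∀ (f : Euc n → ℝ) (R : ℝ) (j : ℕ), j ≠ 0 → 0 < R → Measurable f → (∀ x, 0 ≤ f x) →
      IntegrableOn f (closedBall (0 : Euc n) (2 * R)) volume →
      Integrable (fun x => f x * η (R⁻¹ • x) ^ j) volume := by
    intro f R j hj hR hf hf0 hfi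
    refine (hfi.integrable_indicator measurableSet_closedBall).mono'
      (hf.mul ((hcR R).pow_const j)).aestronglyMeasurable (Eventually.of_forall fun x => ?_)
    rw [Real.norm_of_nonneg (mul_nonneg (hf0 x) (pow_nonneg (hη0 _) _))]
    by_cases hx : x ∈ closedBall (0 : Euc n) (2 * R)
    · rw [Set.indicator_of_mem hx]
      exact mul_le_of_le_one_right (hf0 x) (pow_le_one₀ (hη0 _) (hη1 _))
    · rw [Set.indicator_of_notMem hx, hout R hR x hx]
      simp [hj]
  let a : ℝ → ℝ := fun R => C * R ^ (-(2 * s))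
  have ha0 : ∀ R : ℝ, 0 < R → 0 ≤ a R := fun R hR => by positivity
  let A : ℝ → ℝ := fun R => ∫ x, u x ^ q * η (R⁻¹ • x) ^ m
  have hAi : ∀ R : ℝ, 0 < R → Integrable (fun x => u x ^ q * η (R⁻¹ • x) ^ m) volume := fun R hR =>
    hint _ R m (by simp [hm]) hR huqm huq0 (huqR _ (by linarith))
  have hBi : ∀ R : ℝ, 0 < R → Integrable (fun x => a R * (u x * η (R⁻¹ • x) ^ k)) volume := fun R hR =>
    (hint _ R k hk0 hR hum hu0 (huR _)).const_mul _
  have hA : ∀ R : ℝ, 0 < R → A R ≤ ∫ x, a R * (u x * η (R⁻¹ • x) ^ k) := by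
    intro R hR
    have h1 := husup (fun y => η (R⁻¹ • y) ^ m) ⟨(hηc.comp (contDiff_const_smul _)).pow m, by
      refine HasCompactSupport.intro (isCompact_closedBall (0 : Euc n) (2 * R)) fun x hx => ?_
      rw [hout R hR x hx]; simp [hm]⟩ (fun x => pow_nonneg (hη0 _) _)
    refine h1.trans ?_
    by_cases hi : Integrable (fun x => u x * LK n K (fun y => η (R⁻¹ • y) ^ m) x) volume
    · refine integral_mono hi (hBi R hR) fun x => ?_
      have := mul_le_mul_of_nonneg_left (hLK R hR x) (hu0 x)
      refine this.trans (le_of_eq ?_)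
      simp only [a]; ring
    · rw [integral_undef hi]
      exact integral_nonneg fun x => mul_nonneg (ha0 R hR) (mul_nonneg (hu0 x) (pow_nonneg (hη0 _) _))
  -- volume
  set C3 : ℝ := C ^ p * (2 ^ n * volume.real (ball (0 : Euc n) 1)) with hC3
  have hC30 : 0 ≤ C3 := by positivity
  have hvol : ∀ R : ℝ, 0 < R → a R ^ p * volume.real (closedBall (0 : Euc n) (2 * R)) = C3 := by
    intro R hR
    rw [Measure.addHaar_real_closedBall _ _ (by linarith)]
    simp only [finrank_euclideanSpace, Fintype.card_fin, a]
    rw [Real.mul_rpow hC (by positivity), ← Real.rpow_mul hR.le, mul_pow]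
    have e1 : -(2 * s) * p = -(n:ℝ) := by rw [hp]; field_simp
    rw [e1, Real.rpow_neg hR.le, Real.rpow_natCast, hC3]
    field_simp
  have hindi : ∀ (R c : ℝ), Integrable ((closedBall (0 : Euc n) (2 * R)).indicator fun _ => c) volume :=
    fun R c => IntegrableOn.integrable_indicator
      (integrableOn_const measure_closedBall_lt_top.ne) measurableSet_closedBall
  have hindint : ∀ (R t : ℝ), 0 < R → ∫ x, (closedBall (0 : Euc n) (2 * R)).indicator
      (fun _ => t ^ p * a R ^ p) x = t ^ p * C3 := by
    intro R t hR
    rw [integral_indicator measurableSet_closedBall, setIntegral_const, smul_eq_mul, ← hvol R hR]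
    ring
  -- step 1
  have hstep1 : ∀ R : ℝ, 0 < R → A R ≤ 2 * (2 ^ p * C3) := by
    intro R hR
    have h1 : ∫ x, a R * (u x * η (R⁻¹ • x) ^ k) ≤
        ∫ x, ((1/2) * (u x ^ q * η (R⁻¹ • x) ^ m) +
          (closedBall (0 : Euc n) (2 * R)).indicator (fun _ => 2 ^ p * a R ^ p) x) := by
      refine integral_mono (hBi R hR) (((hAi R hR).const_mul _).add (hindi R _)) fun x => ?_
      have hpos : 0 ≤ u x ^ q * η (R⁻¹ • x) ^ m := mul_nonneg (huq0 x) (pow_nonneg (hη0 _) _)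
      by_cases hx : x ∈ closedBall (0 : Euc n) (2 * R)
      · simp only [Set.indicator_of_mem hx]
        have := young_t q p hqp (a R) (u x * η (R⁻¹ • x) ^ k) 2 (ha0 R hR)
          (mul_nonneg (hu0 x) (pow_nonneg (hη0 _) _)) two_pos
        refine this.trans (add_le_add_left ?_ _)
        have e1 : (2:ℝ) ^ (-q) ≤ 1/2 := by
          calc (2:ℝ) ^ (-q) ≤ 2 ^ (-1 : ℝ) :=
                Real.rpow_le_rpow_of_exponent_le one_le_two (by linarith)
            _ = 1/2 := by rw [Real.rpow_neg_one]; norm_num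
        have e2 : (u x * η (R⁻¹ • x) ^ k) ^ q ≤ u x ^ q * η (R⁻¹ • x) ^ m := by
          rw [Real.mul_rpow (hu0 x) (pow_nonneg (hη0 _) _)]
          refine mul_le_mul_of_nonneg_left ?_ (huq0 x)
          rw [← Real.rpow_natCast, ← Real.rpow_natCast, ← Real.rpow_mul (hη0 _)]
          exact Real.rpow_le_rpow_of_exponent_ge_of_imp (hη0 _) (hη1 _) hmq
            (fun _ h => absurd h (by positivity))
        exact mul_le_mul e1 e2 (by have := hu0 x; have := hη0 (R⁻¹ • x); positivity) (by norm_num)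
      · simp only [Set.indicator_of_notMem hx, hout R hR x hx]
        simp [hk0, hm]
    replace h1 := (hA R hR).trans h1
    rw [integral_add ((hAi R hR).const_mul _) (hindi R _), integral_const_mul, hindint R 2 hR] at h1
    have h3 : A R = ∫ x, u x ^ q * η (R⁻¹ • x) ^ m := rfl
    linarith
  -- global integrability
  have hballA : ∀ R : ℝ, 0 < R → ∫ x in ball (0 : Euc n) R, u x ^ q ≤ A R := by
    intro R hR
    have : ∫ x in ball (0 : Euc n) R, u x ^ q
        = ∫ x in ball (0 : Euc n) R, u x ^ q * η (R⁻¹ • x) ^ m :=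
      setIntegral_congr_fun measurableSet_ball fun x hx => by simp [hin R hR x hx]
    rw [this]
    exact setIntegral_le_integral (hAi R hR)
      (Eventually.of_forall fun x => mul_nonneg (huq0 x) (pow_nonneg (hη0 _) _))
  have hcov : AECover (volume : Measure (Euc n)) atTop (fun R : ℝ => ball (0 : Euc n) R) :=
    aecover_ball tendsto_id
  have hI : Integrable (fun x => u x ^ q) volume := by
    refine hcov.integrable_of_integral_bounded_of_nonneg_ae (2 * (2 ^ p * C3)) (fun R => ?_)
      (Eventually.of_forall huq0) ?_
    · rcases le_or_gt R 0 with h | h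
      · rw [ball_eq_empty.2 h]; exact integrableOn_empty
      · exact huq R h
    · filter_upwards [eventually_gt_atTop 0] with R hR
      exact (hballA R hR).trans (hstep1 R hR)
  have hlim := hcov.integral_tendsto_of_countably_generated hI
  set I := ∫ x, u x ^ q with hIdef
  -- step 2
  have hstep2 : ∀ t r R : ℝ, 0 < t → 0 < R → ∫ x in ball (0 : Euc n) R, u x ^ q ≤
      a R * (∫ x in ball (0 : Euc n) r, u x) +
        t ^ (-q) * (I - ∫ x in ball (0 : Euc n) r, u x ^ q) + t ^ p * C3 := by
    intro t r R ht hR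
    have hr1 : Integrable ((ball (0 : Euc n) r).indicator u) volume :=
      ((huR r).mono_set ball_subset_closedBall).integrable_indicator measurableSet_ball
    have hr2 : Integrable ((ball (0 : Euc n) r)ᶜ.indicator fun x => u x ^ q) volume :=
      hI.indicator measurableSet_ball.compl
    have h1 : ∫ x, a R * (u x * η (R⁻¹ • x) ^ k) ≤
        ∫ x, (a R * (ball (0 : Euc n) r).indicator u x +
          t ^ (-q) * (ball (0 : Euc n) r)ᶜ.indicator (fun x => u x ^ q) x +
          (closedBall (0 : Euc n) (2 * R)).indicator (fun _ => t ^ p * a R ^ p) x) := by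
      refine integral_mono (hBi R hR) (((hr1.const_mul _).add (hr2.const_mul _)).add (hindi R _))
        fun x => ?_
      have haR := ha0 R hR
      have hux := hu0 x
      have h4 : u x * η (R⁻¹ • x) ^ k ≤ u x :=
        mul_le_of_le_one_right hux (pow_le_one₀ (hη0 _) (hη1 _))
      have h5 := mul_le_mul_of_nonneg_left h4 haR
      have h6 : 0 ≤ (closedBall (0 : Euc n) (2 * R)).indicator (fun _ => t ^ p * a R ^ p) x :=
        Set.indicator_nonneg (fun _ _ => by positivity) x
      by_cases hx : x ∈ ball (0 : Euc n) r
      · have hx' : x ∉ (ball (0 : Euc n) r)ᶜ := fun h => h hx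
        simp only [Set.indicator_of_mem hx, Set.indicator_of_notMem hx']
        linarith
      · have hx' : x ∈ (ball (0 : Euc n) r)ᶜ := hx
        simp only [Set.indicator_of_mem hx', Set.indicator_of_notMem hx]
        by_cases hx2 : x ∈ closedBall (0 : Euc n) (2 * R)
        · simp only [Set.indicator_of_mem hx2]
          have := young_t q p hqp (a R) (u x) t haR hux ht
          linarith
        · simp only [Set.indicator_of_notMem hx2, hout R hR x hx2]
          have : 0 ≤ t ^ (-q) * u x ^ q := by positivity
          simp [hk0, this]
    replace h1 := (hA R hR).trans h1
    have hsum : Integrable (fun x => a R * (ball (0 : Euc n) r).indicator u x +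
          t ^ (-q) * (ball (0 : Euc n) r)ᶜ.indicator (fun x => u x ^ q) x) volume :=
      (hr1.const_mul _).add (hr2.const_mul _)
    rw [integral_add hsum (hindi R _),
      integral_add (hr1.const_mul _) (hr2.const_mul _), integral_const_mul, integral_const_mul,
      hindint R t hR, integral_indicator measurableSet_ball,
      integral_indicator measurableSet_ball.compl] at h1
    have h2 := integral_add_compl (measurableSet_ball (x := (0 : Euc n)) (ε := r)) hI
    have h3 : ∫ x in (ball (0 : Euc n) r)ᶜ, u x ^ q = I - ∫ x in ball (0 : Euc n) r, u x ^ q := by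
      linarith
    rw [h3] at h1
    exact (hballA R hR).trans h1
  have ha_lim : Tendsto a atTop (𝓝 0) := by
    have := (tendsto_rpow_neg_atTop (y := 2 * s) (by linarith)).const_mul C
    simpa [a] using this
  have hstep3 : ∀ t r : ℝ, 0 < t →
      I ≤ t ^ (-q) * (I - ∫ x in ball (0 : Euc n) r, u x ^ q) + t ^ p * C3 := by
    intro t r ht
    have h1 := ((ha_lim.mul_const (∫ x in ball (0 : Euc n) r, u x)).add_const
      (t ^ (-q) * (I - ∫ x in ball (0 : Euc n) r, u x ^ q))).add_const (t ^ p * C3)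
    rw [zero_mul, zero_add] at h1
    refine le_of_tendsto_of_tendsto hlim h1 ?_
    filter_upwards [eventually_gt_atTop 0] with R hR
    exact hstep2 t r R ht hR
  have hstep4 : ∀ t : ℝ, 0 < t → I ≤ t ^ p * C3 := by
    intro t ht
    have h1 := ((hlim.const_sub I).const_mul (t ^ (-q))).add_const (t ^ p * C3)
    rw [sub_self, mul_zero, zero_add] at h1
    exact ge_of_tendsto' h1 fun r => hstep3 t r ht
  have hI0 : I ≤ 0 := by
    have h1 : Tendsto (fun t : ℝ => t ^ p * C3) (𝓝[>] 0) (𝓝 0) := by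
      have := ((Real.continuous_rpow_const hp0.le).tendsto 0).mul_const C3
      rw [Real.zero_rpow hp0.ne', zero_mul] at this
      exact this.mono_left nhdsWithin_le_nhds
    refine ge_of_tendsto h1 ?_
    filter_upwards [self_mem_nhdsWithin] with t ht
    exact hstep4 t ht
  have hI1 : I = 0 := le_antisymm hI0 (integral_nonneg huq0)
  have := (integral_eq_zero_iff_of_nonneg huq0 hI).1 hI1
  filter_upwards [this] with x hx
  exact ((Real.rpow_eq_zero (hu0 x) hq0.ne').1 hx)
end
end

section
/- (Abstract subcritical iteration) Let n ≥ 1, q > 1, a < 0 and b > n/q be real numbers. Let S : [1,∞) → [0,∞) be nondecreasing and suppose there exist constants C₀, C₁ > 0 such that S(R) ≤ C₀ Rⁿ for all R ≥ 1 and S(R) ≤ C₁ R^{a} Σ_{k=0}^{∞} 2^{−kb} S(2^{k+1}R)^{1/q} for all R ≥ 1. Then S(R) = 0 for all R ≥ 1. -/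
open MeasureTheory Metric

noncomputable section

theorem asi_zero_of_neg (S : ℝ → ℝ) (hSnonneg : ∀ R : ℝ, 1 ≤ R → 0 ≤ S R)
    (hSmono : ∀ R R' : ℝ, 1 ≤ R → R ≤ R' → S R ≤ S R') (C m : ℝ) (hm : m < 0)
    (h : ∀ R : ℝ, 1 ≤ R → S R ≤ C * R ^ m) : ∀ R : ℝ, 1 ≤ R → S R = 0 := by
  intro R hR
  refine le_antisymm ?_ (hSnonneg R hR)
  have ht : Filter.Tendsto (fun x : ℝ => C * x ^ m) Filter.atTop (nhds 0) := by
    have := (tendsto_rpow_neg_atTop (y := -m) (by linarith)).const_mul C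
    simpa using this
  refine ge_of_tendsto ht ?_
  filter_upwards [Filter.eventually_ge_atTop R] with x hx
  exact (hSmono R x hR hx).trans (h x (hR.trans hx))

theorem asi_step (q a b : ℝ) (hq : 1 < q)
    (S : ℝ → ℝ) (hSnonneg : ∀ R : ℝ, 1 ≤ R → 0 ≤ S R)
    (C₁ : ℝ) (hC₁ : 0 < C₁) (C m : ℝ) (hC : 0 < C) (hmb : m / q < b)
    (hgrowth : ∀ R : ℝ, 1 ≤ R → S R ≤ C * R ^ m)
    (hrec : ∀ R : ℝ, 1 ≤ R →
      ENNReal.ofReal (S R) ≤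
        ENNReal.ofReal (C₁ * R ^ a) *
          ∑' k : ℕ, ENNReal.ofReal
            ((2 : ℝ) ^ (-(k : ℝ) * b) * (S ((2 : ℝ) ^ (k + 1) * R)) ^ (1 / q))) :
    ∃ C' : ℝ, 0 < C' ∧ ∀ R : ℝ, 1 ≤ R → S R ≤ C' * R ^ (a + m / q) := by
  set r : ℝ := (2 : ℝ) ^ (m / q - b) with hr
  have hr0 : 0 < r := by positivity
  have hr1 : r < 1 := Real.rpow_lt_one_of_one_lt_of_neg (by norm_num) (by linarith)
  have hr2 : 0 < (1 - r)⁻¹ := inv_pos.2 (by linarith)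
  have hsum := hasSum_geometric_of_lt_one hr0.le hr1
  refine ⟨C₁ * (C ^ (1 / q) * 2 ^ (m / q)) * (1 - r)⁻¹, by positivity, fun R hR => ?_⟩
  have hR0 : 0 < R := by linarith
  set D : ℝ := C ^ (1 / q) * 2 ^ (m / q) * R ^ (m / q) with hD
  have hD0 : 0 < D := by positivity
  have hterm : ∀ k : ℕ, (2 : ℝ) ^ (-(k : ℝ) * b) * (S ((2 : ℝ) ^ (k + 1) * R)) ^ (1 / q)
      ≤ D * r ^ k := by
    intro k
    have h1 : (1 : ℝ) ≤ (2 : ℝ) ^ (k + 1) * R :=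
      one_le_mul_of_one_le_of_one_le (one_le_pow₀ (by norm_num)) hR
    have h2 : (S ((2 : ℝ) ^ (k + 1) * R)) ^ (1 / q)
        ≤ (C * ((2 : ℝ) ^ (k + 1) * R) ^ m) ^ (1 / q) :=
      Real.rpow_le_rpow (hSnonneg _ h1) (hgrowth _ h1) (by positivity)
    have h3 : (C * ((2 : ℝ) ^ (k + 1) * R) ^ m) ^ (1 / q)
        = C ^ (1 / q) * ((2 : ℝ) ^ (((k : ℝ) + 1) * (m / q)) * R ^ (m / q)) := by
      rw [Real.mul_rpow hC.le (by positivity), ← Real.rpow_mul (by positivity),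
        Real.mul_rpow (by positivity) hR0.le, ← Real.rpow_natCast 2 (k + 1),
        ← Real.rpow_mul (by norm_num)]
      push_cast
      rw [mul_one_div]
    have h4 : r ^ k = (2 : ℝ) ^ ((m / q - b) * k) := by
      rw [hr, ← Real.rpow_natCast, ← Real.rpow_mul (by norm_num)]
    have h5 : (2 : ℝ) ^ (-(k : ℝ) * b) * (2 : ℝ) ^ (((k : ℝ) + 1) * (m / q))
        = 2 ^ (m / q) * r ^ k := by
      rw [h4, ← Real.rpow_add (by norm_num), ← Real.rpow_add (by norm_num)]
      congr 1
      ring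
    calc _ ≤ (2 : ℝ) ^ (-(k : ℝ) * b) * (C * ((2 : ℝ) ^ (k + 1) * R) ^ m) ^ (1 / q) := by
          gcongr
      _ = C ^ (1 / q) * R ^ (m / q) *
          ((2 : ℝ) ^ (-(k : ℝ) * b) * (2 : ℝ) ^ (((k : ℝ) + 1) * (m / q))) := by
          rw [h3]; ring
      _ = D * r ^ k := by rw [h5, hD]; ring
  have hs : HasSum (fun k : ℕ => D * r ^ k) (D * (1 - r)⁻¹) := hsum.mul_left D
  have hle : ENNReal.ofReal (S R) ≤ ENNReal.ofReal (C₁ * R ^ a * (D * (1 - r)⁻¹)) := by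
    refine (hrec R hR).trans ?_
    rw [ENNReal.ofReal_mul (p := C₁ * R ^ a) (by positivity), ← hs.tsum_eq,
      ENNReal.ofReal_tsum_of_nonneg (fun k => by positivity) hs.summable]
    exact mul_le_mul_right (ENNReal.tsum_le_tsum fun k => ENNReal.ofReal_le_ofReal (hterm k)) _
  have := (ENNReal.ofReal_le_ofReal_iff (by positivity)).1 hle
  refine this.trans (le_of_eq ?_)
  rw [Real.rpow_add hR0, hD]
  ring

/-- Abstract subcritical iteration: if `S : [1,∞) → [0,∞)` is nondecreasing,
`S(R) ≤ C₀ R^n`, and `S(R) ≤ C₁ R^a Σ_{k≥0} 2^{-kb} S(2^{k+1}R)^{1/q}` (series in `ℝ≥0∞`)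
with `a < 0` and `b > n/q`, then `S ≡ 0` on `[1,∞)`. -/
theorem abstract_subcritical_iteration
    (n : ℕ) (hn : 1 ≤ n) (q a b : ℝ) (hq : 1 < q) (ha : a < 0) (hb : (n : ℝ) / q < b)
    (S : ℝ → ℝ) (hSnonneg : ∀ R : ℝ, 1 ≤ R → 0 ≤ S R)
    (hSmono : ∀ R R' : ℝ, 1 ≤ R → R ≤ R' → S R ≤ S R')
    (C₀ C₁ : ℝ) (hC₀ : 0 < C₀) (hC₁ : 0 < C₁)
    (hgrowth : ∀ R : ℝ, 1 ≤ R → S R ≤ C₀ * R ^ (n : ℝ))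
    (hrec : ∀ R : ℝ, 1 ≤ R →
      ENNReal.ofReal (S R) ≤
        ENNReal.ofReal (C₁ * R ^ a) *
          ∑' k : ℕ, ENNReal.ofReal
            ((2 : ℝ) ^ (-(k : ℝ) * b) * (S ((2 : ℝ) ^ (k + 1) * R)) ^ (1 / q))) :
    ∀ R : ℝ, 1 ≤ R → S R = 0 := by
  by_contra hne
  have key : ∀ j : ℕ, ∃ C m : ℝ, 0 < C ∧ 0 ≤ m ∧ m ≤ n + j * a ∧
      ∀ R : ℝ, 1 ≤ R → S R ≤ C * R ^ m := by
    intro j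
    induction j with
    | zero => exact ⟨C₀, n, hC₀, by positivity, by simp, hgrowth⟩
    | succ j ih =>
      obtain ⟨C, m, hC, hm0, hm, hg⟩ := ih
      have hja : (j : ℝ) * a ≤ 0 := mul_nonpos_of_nonneg_of_nonpos (by positivity) ha.le
      have hmb : m / q < b := by
        refine lt_of_le_of_lt ?_ hb
        gcongr
        linarith
      obtain ⟨C', hC', hg'⟩ := asi_step q a b hq S hSnonneg C₁ hC₁ C m hC hmb hg hrec
      have hmq : m / q ≤ m := div_le_self hm0 hq.le
      refine ⟨C', a + m / q, hC', ?_, ?_, hg'⟩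
      · by_contra hneg
        exact hne (asi_zero_of_neg S hSnonneg hSmono C' _ (not_le.1 hneg) hg')
      · push_cast
        linarith
  obtain ⟨j, hj⟩ := exists_nat_gt ((n : ℝ) / (-a))
  obtain ⟨C, m, _, hm0, hm, _⟩ := key j
  rw [div_lt_iff₀ (by linarith)] at hj
  linarith
end
end

section
/- (Abstract critical iteration) Let n ≥ 1, q > 1 and b > n/q be real numbers. Let S : [1,∞) → [0,∞) be nondecreasing and suppose there exist constants C₀, C₁ > 0 such that S(R) ≤ C₀ Rⁿ for all R ≥ 1 and S(R) ≤ C₁ Σ_{k=0}^{∞} 2^{−kb} S(2^{k+1}R)^{1/q} for all R ≥ 1. Then sup_{R ≥ 1} S(R) < ∞. -/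
open MeasureTheory Metric

noncomputable section

/-- Abstract critical iteration: if `S : [1,∞) → [0,∞)` is nondecreasing,
`S(R) ≤ C₀ R^n`, and `S(R) ≤ C₁ Σ_{k≥0} 2^{-kb} S(2^{k+1}R)^{1/q}` (series in `ℝ≥0∞`)
with `b > n/q`, then `S` is bounded on `[1,∞)`. -/
theorem abstract_critical_iteration
    (n : ℕ) (hn : 1 ≤ n) (q b : ℝ) (hq : 1 < q) (hb : (n : ℝ) / q < b)
    (S : ℝ → ℝ) (hSnonneg : ∀ R : ℝ, 1 ≤ R → 0 ≤ S R)
    (hSmono : ∀ R R' : ℝ, 1 ≤ R → R ≤ R' → S R ≤ S R')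
    (C₀ C₁ : ℝ) (hC₀ : 0 < C₀) (hC₁ : 0 < C₁)
    (hgrowth : ∀ R : ℝ, 1 ≤ R → S R ≤ C₀ * R ^ (n : ℝ))
    (hrec : ∀ R : ℝ, 1 ≤ R →
      ENNReal.ofReal (S R) ≤
        ENNReal.ofReal C₁ *
          ∑' k : ℕ, ENNReal.ofReal
            ((2 : ℝ) ^ (-(k : ℝ) * b) * (S ((2 : ℝ) ^ (k + 1) * R)) ^ (1 / q))) :
    ∃ M : ℝ, ∀ R : ℝ, 1 ≤ R → S R ≤ M := by
  have hq0 : 0 < q := by linarith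
  obtain ⟨r, hr⟩ : ∃ r : ℝ, r = 1 / q := ⟨_, rfl⟩
  have hr0 : 0 < r := by rw [hr]; positivity
  have hr1 : r < 1 := by rw [hr, div_lt_one hq0]; exact hq
  have hbr : (n : ℝ) * r < b := by rw [hr]; simpa [div_eq_mul_inv] using hb
  rw [← hr] at hrec
  have hn0 : (0 : ℝ) ≤ n := Nat.cast_nonneg n
  set ρ : ℝ := (2 : ℝ) ^ ((n : ℝ) * r - b) with hρ
  have hρ0 : 0 < ρ := by positivity
  have hρ1 : ρ < 1 := Real.rpow_lt_one_of_one_lt_of_neg (by norm_num) (by linarith)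
  set D : ℝ := (2 : ℝ) ^ ((n : ℝ) * r) * (1 - ρ)⁻¹ with hD
  have hD0 : 0 < D := mul_pos (by positivity) (inv_pos.2 (by linarith))
  set L : ℝ := C₁ * D with hL
  have hL0 : 0 < L := by positivity
  set A : ℝ := max C₀ (L ^ (1 / (1 - r))) with hA
  have hA0 : 0 < A := lt_max_of_lt_left hC₀
  have hLA : L * A ^ r ≤ A := by
    have h1 : L ≤ A ^ (1 - r) := by
      calc L = (L ^ (1 / (1 - r))) ^ (1 - r) := by
            rw [← Real.rpow_mul hL0.le, one_div_mul_cancel (by linarith), Real.rpow_one]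
        _ ≤ A ^ (1 - r) :=
            Real.rpow_le_rpow (by positivity) (le_max_right _ _) (by linarith)
    calc L * A ^ r ≤ A ^ (1 - r) * A ^ r := by gcongr
      _ = A := by rw [← Real.rpow_add hA0]; simp
  have step : ∀ m : ℝ, 0 ≤ m → m ≤ n → (∀ R : ℝ, 1 ≤ R → S R ≤ A * R ^ m) →
      ∀ R : ℝ, 1 ≤ R → S R ≤ A * R ^ (m * r) := by
    intro m hm0 hmn h R hR
    have hR0 : 0 < R := by linarith
    have hterm : ∀ k : ℕ, (2 : ℝ) ^ (-(k : ℝ) * b) * (S ((2 : ℝ) ^ (k + 1) * R)) ^ r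
        ≤ (A ^ r * R ^ (m * r) * (2 : ℝ) ^ ((n : ℝ) * r)) * ρ ^ k := by
      intro k
      have h2 : (1 : ℝ) ≤ (2 : ℝ) ^ (k + 1) * R :=
        one_le_mul_of_one_le_of_one_le (one_le_pow₀ (by norm_num)) hR
      have e1 : (A * ((2 : ℝ) ^ (k + 1) * R) ^ m) ^ r
          = A ^ r * R ^ (m * r) * (2 : ℝ) ^ (((k : ℝ) + 1) * (m * r)) := by
        rw [Real.mul_rpow hA0.le (by positivity), ← Real.rpow_mul (by positivity),
          Real.mul_rpow (by positivity) hR0.le, ← Real.rpow_natCast, ← Real.rpow_mul (by norm_num)]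
        push_cast
        ring
      have e2 : (2 : ℝ) ^ ((n : ℝ) * r) * ρ ^ k
          = (2 : ℝ) ^ (-(k : ℝ) * b) * (2 : ℝ) ^ (((k : ℝ) + 1) * (n * r)) := by
        rw [hρ, ← Real.rpow_natCast, ← Real.rpow_mul (by norm_num),
          ← Real.rpow_add (by norm_num), ← Real.rpow_add (by norm_num)]
        congr 1
        ring
      calc (2 : ℝ) ^ (-(k : ℝ) * b) * (S ((2 : ℝ) ^ (k + 1) * R)) ^ r
          ≤ (2 : ℝ) ^ (-(k : ℝ) * b) * (A * ((2 : ℝ) ^ (k + 1) * R) ^ m) ^ r := by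
            apply mul_le_mul_of_nonneg_left _ (by positivity)
            exact Real.rpow_le_rpow (hSnonneg _ h2) (h _ h2) hr0.le
        _ = (2 : ℝ) ^ (-(k : ℝ) * b) *
              (A ^ r * R ^ (m * r) * (2 : ℝ) ^ (((k : ℝ) + 1) * (m * r))) := by rw [e1]
        _ ≤ (2 : ℝ) ^ (-(k : ℝ) * b) *
              (A ^ r * R ^ (m * r) * (2 : ℝ) ^ (((k : ℝ) + 1) * (n * r))) := by
            gcongr
            norm_num
        _ = _ := by rw [mul_assoc _ _ (ρ ^ k), e2]; ring
    have hsum : HasSum (fun k : ℕ => (A ^ r * R ^ (m * r) * (2 : ℝ) ^ ((n : ℝ) * r)) * ρ ^ k)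
        ((A ^ r * R ^ (m * r) * (2 : ℝ) ^ ((n : ℝ) * r)) * (1 - ρ)⁻¹) :=
      (hasSum_geometric_of_lt_one hρ0.le hρ1).mul_left _
    have h3 : ENNReal.ofReal (S R) ≤ ENNReal.ofReal (L * A ^ r * R ^ (m * r)) := by
      refine (hrec R hR).trans ?_
      refine (mul_le_mul_right (ENNReal.tsum_le_tsum
        fun k => ENNReal.ofReal_le_ofReal (hterm k)) _).trans ?_
      rw [← ENNReal.ofReal_tsum_of_nonneg (fun k => by positivity) hsum.summable, hsum.tsum_eq,
        ← ENNReal.ofReal_mul hC₁.le]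
      apply ENNReal.ofReal_le_ofReal
      rw [hL, hD]
      apply le_of_eq
      ring
    rw [ENNReal.ofReal_le_ofReal_iff (by positivity)] at h3
    exact h3.trans (by gcongr)
  have iter : ∀ j : ℕ, ∀ R : ℝ, 1 ≤ R → S R ≤ A * R ^ ((n : ℝ) * r ^ j) := by
    intro j
    induction j with
    | zero =>
      intro R hR
      have hR0 : 0 < R := by linarith
      refine (hgrowth R hR).trans ?_
      rw [pow_zero, mul_one]
      exact mul_le_mul_of_nonneg_right (le_max_left _ _) (by positivity)
    | succ j ih =>
      intro R hR
      have := step _ (by positivity)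
        (mul_le_of_le_one_right hn0 (pow_le_one₀ hr0.le hr1.le)) ih R hR
      rwa [mul_assoc, ← pow_succ] at this
  refine ⟨A, fun R hR => ?_⟩
  have hR0 : 0 < R := by linarith
  have ht : Filter.Tendsto (fun j : ℕ => A * R ^ ((n : ℝ) * r ^ j)) Filter.atTop
      (nhds (A * R ^ ((n : ℝ) * 0))) := by
    apply Filter.Tendsto.const_mul
    exact Filter.Tendsto.rpow tendsto_const_nhds
      ((tendsto_pow_atTop_nhds_zero_of_lt_one hr0.le hr1).const_mul _) (Or.inl hR0.ne')
  have := ge_of_tendsto' ht (fun j => iter j R hR)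
  simpa using this
end
end
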